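/- arXiv:1107.4373 — 2 statements merged into one kernel-verified Lean document; each statement's English description precedes it below -/
import Mathlib

section
/- For any skew shape A, there is exactly one LR filling of A with content rows(A), and exactly one LR filling of A with content cols(A)^t; in particular, the Schur functions indexed by rows(A) and by cols(A)^t each appear with coefficient exactly 1 in the Schur expansion of the skew Schur function s_A. -/
/-- A skew shape `outer / inner`: the boxes of the Young diagram of `outer`
that are not boxes of the Young diagram of `inner`. -/
structure SkewShape where
  outer : YoungDiagram
  inner : YoungDiagram
  inner_le : inner ≤ outer

namespace SkewShape

/-- The set of boxes of a skew shape. -/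
def cells (A : SkewShape) : Finset (ℕ × ℕ) := A.outer.cells \ A.inner.cells

/-- The size of a skew shape is its number of boxes. -/
def size (A : SkewShape) : ℕ := A.cells.card

/-- The length of row `i` of a skew shape. -/
def rowLen (A : SkewShape) (i : ℕ) : ℕ := (A.cells.filter fun c => c.1 = i).card

/-- The length of column `j` of a skew shape. -/
def colLen (A : SkewShape) (j : ℕ) : ℕ := (A.cells.filter fun c => c.2 = j).card

/-- The set of indices of nonempty rows. -/
def rowSet (A : SkewShape) : Finset ℕ := A.cells.image Prod.fst

/-- The set of indices of nonempty columns. -/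
def colSet (A : SkewShape) : Finset ℕ := A.cells.image Prod.snd

/-- The number of nonempty rows. -/
def numRows (A : SkewShape) : ℕ := A.rowSet.card

/-- The number of nonempty columns. -/
def numCols (A : SkewShape) : ℕ := A.colSet.card

/-- `rows A`: the multiset of lengths of the nonempty rows of `A`
(equivalently, that sequence sorted into weakly decreasing order). -/
def rows (A : SkewShape) : Multiset ℕ := A.rowSet.val.map A.rowLen

/-- `cols A`: the multiset of lengths of the nonempty columns of `A`. -/
def cols (A : SkewShape) : Multiset ℕ := A.colSet.val.map A.colLen

/-- A skew shape is disconnected if its boxes can be split into two nonempty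
parts such that no box of one part shares a row or a column with a box of the
other part. -/
def Disconnected (A : SkewShape) : Prop :=
  ∃ B C : Finset (ℕ × ℕ), B.Nonempty ∧ C.Nonempty ∧ B ∪ C = A.cells ∧ B ∩ C = ∅ ∧
    ∀ b ∈ B, ∀ c ∈ C, b.1 ≠ c.1 ∧ b.2 ≠ c.2

/-- A skew shape is connected if it is nonempty and not disconnected. -/
def Connected (A : SkewShape) : Prop := A.cells.Nonempty ∧ ¬ A.Disconnected

/-- A ribbon is a connected skew shape containing no 2×2 block of boxes. -/
def Ribbon (A : SkewShape) : Prop :=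
  A.Connected ∧ ∀ i j : ℕ, ¬ ((i, j) ∈ A.cells ∧ (i, j + 1) ∈ A.cells ∧
    (i + 1, j) ∈ A.cells ∧ (i + 1, j + 1) ∈ A.cells)

/-- The lengths of any two nonempty rows differ by at most one. -/
def RowEquitable (A : SkewShape) : Prop :=
  ∀ i ∈ A.rowSet, ∀ i' ∈ A.rowSet, A.rowLen i ≤ A.rowLen i' + 1

/-- The lengths of any two nonempty columns differ by at most one. -/
def ColEquitable (A : SkewShape) : Prop :=
  ∀ j ∈ A.colSet, ∀ j' ∈ A.colSet, A.colLen j ≤ A.colLen j' + 1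

/-- Equitable: both row equitable and column equitable. -/
def Equitable (A : SkewShape) : Prop := A.RowEquitable ∧ A.ColEquitable

/-- A filling of a skew shape is semistandard if its entries are positive
integers, weakly increasing along rows and strictly increasing down columns. -/
def IsSsyt (A : SkewShape) (T : ℕ × ℕ → ℕ) : Prop :=
  (∀ c ∈ A.cells, 1 ≤ T c) ∧
  (∀ i j j', (i, j) ∈ A.cells → (i, j') ∈ A.cells → j ≤ j' → T (i, j) ≤ T (i, j')) ∧
  (∀ i i' j, (i, j) ∈ A.cells → (i', j) ∈ A.cells → i < i' → T (i, j) < T (i', j))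

end SkewShape

/-- `c` comes weakly before `d` in the reverse reading order (right to left
along rows, rows top to bottom). -/
def ReadsBefore (c d : ℕ × ℕ) : Prop := c.1 < d.1 ∨ (c.1 = d.1 ∧ d.2 ≤ c.2)

instance : DecidableRel ReadsBefore := fun c d => by unfold ReadsBefore; infer_instance

namespace SkewShape

/-- The number of boxes of `A` filled with the entry `k` by the filling `T`. -/
def content (A : SkewShape) (T : ℕ × ℕ → ℕ) (k : ℕ) : ℕ :=
  (A.cells.filter fun c => T c = k).card

/-- A Littlewood--Richardson filling: a semistandard filling such that every
prefix of the reverse reading word contains at least as many `k`'s as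
`(k+1)`'s, for every positive `k`. -/
def IsLR (A : SkewShape) (T : ℕ × ℕ → ℕ) : Prop :=
  A.IsSsyt T ∧ ∀ d ∈ A.cells, ∀ k : ℕ,
    (A.cells.filter fun c => T c = k + 2 ∧ ReadsBefore c d).card ≤
    (A.cells.filter fun c => T c = k + 1 ∧ ReadsBefore c d).card

end SkewShape

/-- The `i`-th largest part (0-indexed) of a multiset of natural numbers,
i.e. the `i`-th entry of the multiset sorted into weakly decreasing order. -/
def part (lam : Multiset ℕ) (i : ℕ) : ℕ := (lam.sort (· ≥ ·)).getD i 0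

namespace SkewShape

/-- The support of a skew shape `A`: the set of partitions `lam` (multisets of
positive integers) for which there exists an LR filling of `A` of content `lam`. -/
def supp (A : SkewShape) : Set (Multiset ℕ) :=
  {lam | 0 ∉ lam ∧ ∃ T : ℕ × ℕ → ℕ, A.IsLR T ∧ ∀ i : ℕ, A.content T (i + 1) = part lam i}

/-- The set of LR fillings of `A` of content `lam` (normalized to vanish
outside the boxes of `A`). -/
def LRset (A : SkewShape) (lam : Multiset ℕ) : Set ((ℕ × ℕ) → ℕ) :=
  {T | A.IsLR T ∧ (∀ c, c ∉ A.cells → T c = 0) ∧ ∀ i : ℕ, A.content T (i + 1) = part lam i}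

/-- `s_A − s_B` is Schur-positive: for every partition, the number of LR
fillings of `B` of that content is at most the number for `A`. -/
def SchurPosDiff (A B : SkewShape) : Prop :=
  ∀ lam : Multiset ℕ, (B.LRset lam).ncard ≤ (A.LRset lam).ncard

end SkewShape

/-- The sum of the `k` largest parts of a multiset of natural numbers. -/
def psum (lam : Multiset ℕ) (k : ℕ) : ℕ := ((lam.sort (· ≥ ·)).take k).sum

/-- Dominance order: `DomLe lam mu` means `lam ⊴ mu`, i.e. for every `k` the
sum of the `k` largest parts of `lam` is at most that of `mu`. -/
def DomLe (lam mu : Multiset ℕ) : Prop := ∀ k : ℕ, psum lam k ≤ psum mu k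

/-- The conjugate (transpose) of a partition given as a multiset: its parts
are the numbers `#{x ∈ lam | x ≥ j}` for `j = 1, 2, …`. -/
def conj (lam : Multiset ℕ) : Multiset ℕ :=
  ((Finset.range lam.sum).val.map fun j => Multiset.card (lam.filter fun x => j + 1 ≤ x)).filter
    fun y => y ≠ 0

namespace SkewShape

theorem mem_cells_row (A : SkewShape) (i j : ℕ) :
    (i, j) ∈ A.cells ↔ A.inner.rowLen i ≤ j ∧ j < A.outer.rowLen i := by
  unfold cells
  rw [Finset.mem_sdiff, YoungDiagram.mem_cells, YoungDiagram.mem_cells,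
    YoungDiagram.mem_iff_lt_rowLen, YoungDiagram.mem_iff_lt_rowLen]
  omega

theorem mem_cells_col (A : SkewShape) (i j : ℕ) :
    (i, j) ∈ A.cells ↔ A.inner.colLen j ≤ i ∧ i < A.outer.colLen j := by
  unfold cells
  rw [Finset.mem_sdiff, YoungDiagram.mem_cells, YoungDiagram.mem_cells,
    YoungDiagram.mem_iff_lt_colLen, YoungDiagram.mem_iff_lt_colLen]
  omega

theorem rowLen_eq (A : SkewShape) (i : ℕ) :
    A.rowLen i = A.outer.rowLen i - A.inner.rowLen i := by
  have : A.cells.filter (fun c => c.1 = i) =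
      (Finset.Ico (A.inner.rowLen i) (A.outer.rowLen i)).image (fun j => (i, j)) := by
    ext ⟨a, b⟩
    simp only [Finset.mem_filter, mem_cells_row, Finset.mem_image, Finset.mem_Ico, Prod.mk.injEq]
    constructor
    · rintro ⟨h, rfl⟩; exact ⟨b, h, rfl, rfl⟩
    · rintro ⟨x, h, rfl, rfl⟩; exact ⟨h, rfl⟩
  unfold rowLen
  rw [this, Finset.card_image_of_injective _ (fun x y h => by simpa using h), Nat.card_Ico]

theorem colLen_eq (A : SkewShape) (j : ℕ) :
    A.colLen j = A.outer.colLen j - A.inner.colLen j := by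
  have : A.cells.filter (fun c => c.2 = j) =
      (Finset.Ico (A.inner.colLen j) (A.outer.colLen j)).image (fun i => (i, j)) := by
    ext ⟨a, b⟩
    simp only [Finset.mem_filter, mem_cells_col, Finset.mem_image, Finset.mem_Ico, Prod.mk.injEq]
    constructor
    · rintro ⟨h, rfl⟩; exact ⟨a, h, rfl, rfl⟩
    · rintro ⟨x, h, rfl, rfl⟩; exact ⟨h, rfl⟩
  unfold colLen
  rw [this, Finset.card_image_of_injective _ (fun x y h => by simpa using h), Nat.card_Ico]

theorem lattice_of (A : SkewShape) (T g : ℕ × ℕ → ℕ)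
    (hinj : ∀ c ∈ A.cells, ∀ d ∈ A.cells, T c = T d → g c = g d → c = d)
    (hpred : ∀ c ∈ A.cells, ∀ k, T c = k + 2 →
      ∃ e ∈ A.cells, T e = k + 1 ∧ g e = g c ∧ e.1 < c.1) :
    ∀ d ∈ A.cells, ∀ k : ℕ,
    (A.cells.filter fun c => T c = k + 2 ∧ ReadsBefore c d).card ≤
    (A.cells.filter fun c => T c = k + 1 ∧ ReadsBefore c d).card := by
  intro d _ k
  have h1 : ((A.cells.filter fun c => T c = k + 2 ∧ ReadsBefore c d).image g).card =
      (A.cells.filter fun c => T c = k + 2 ∧ ReadsBefore c d).card := by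
    apply Finset.card_image_of_injOn
    intro x hx y hy h
    simp only [Finset.coe_filter, Set.mem_ofPred_eq] at hx hy
    exact hinj x hx.1 y hy.1 (hx.2.1.trans hy.2.1.symm) h
  rw [← h1]
  refine le_trans (Finset.card_le_card ?_) (Finset.card_image_le (f := g))
  intro q hq
  simp only [Finset.mem_image, Finset.mem_filter] at hq ⊢
  obtain ⟨c, ⟨hc, hT, hr⟩, rfl⟩ := hq
  obtain ⟨e, he, hTe, hg, hlt⟩ := hpred c hc k hT
  refine ⟨e, ⟨he, hTe, ?_⟩, hg⟩
  unfold ReadsBefore at *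
  omega

theorem map_eq_of_content (A : SkewShape) (T T' : ℕ × ℕ → ℕ)
    (h : ∀ k, A.content T k = A.content T' k) :
    A.cells.val.map T = A.cells.val.map T' := by
  ext k
  have := h k
  unfold content at this
  rw [Multiset.count_map, Multiset.count_map]
  rw [Finset.card_def, Finset.card_def, Finset.filter_val, Finset.filter_val] at this
  have hc : ∀ S : ℕ × ℕ → ℕ, A.cells.val.filter (fun a => k = S a) =
      A.cells.val.filter (fun a => S a = k) :=
    fun S => Multiset.filter_congr (fun x _ => ⟨Eq.symm, Eq.symm⟩)
  rw [hc, hc]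
  exact this

theorem sum_eq_of_content (A : SkewShape) (T T' : ℕ × ℕ → ℕ)
    (h : ∀ k, A.content T k = A.content T' k) (f : ℕ → ℕ) :
    ∑ c ∈ A.cells, f (T c) = ∑ c ∈ A.cells, f (T' c) := by
  have := congrArg (fun m => (m.map f).sum) (map_eq_of_content A T T' h)
  simp only [Multiset.map_map] at this
  exact this

theorem content_zero (A : SkewShape) (T : ℕ × ℕ → ℕ) (h : ∀ c ∈ A.cells, 1 ≤ T c) :
    A.content T 0 = 0 := by
  unfold content
  rw [Finset.card_eq_zero, Finset.filter_eq_empty_iff]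
  intro c hc h0
  have := h c hc
  omega

theorem content_eq_of_LRset (A : SkewShape) (lam : Multiset ℕ) (T T' : ℕ × ℕ → ℕ)
    (h : T ∈ A.LRset lam) (h' : T' ∈ A.LRset lam) (k : ℕ) : A.content T k = A.content T' k := by
  cases k with
  | zero => rw [content_zero A T h.1.1.1, content_zero A T' h'.1.1.1]
  | succ k => rw [h.2.2, h'.2.2]

theorem eq_of_le (A : SkewShape) (lam : Multiset ℕ) (T T' : ℕ × ℕ → ℕ)
    (h : T ∈ A.LRset lam) (h' : T' ∈ A.LRset lam) (hle : ∀ c ∈ A.cells, T c ≤ T' c) : T = T' := by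
  have hs := sum_eq_of_content A T T' (content_eq_of_LRset A lam T T' h h') id
  have := (Finset.sum_eq_sum_iff_of_le hle).1 hs
  funext c
  by_cases hc : c ∈ A.cells
  · exact this c hc
  · rw [h.2.1 c hc, h'.2.1 c hc]

theorem getD_iff (q : ℕ) (hq : 1 ≤ q) : ∀ (l : List ℕ), l.Pairwise (· ≥ ·) → ∀ k,
    (q ≤ l.getD k 0 ↔ k < l.countP (fun x => decide (q ≤ x))) := by
  intro l
  induction l with
  | nil => intro _ k; simp; omega
  | cons x l ih =>
    intro hl k
    rw [List.pairwise_cons] at hl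
    have ih := ih hl.2
    by_cases hx : q ≤ x
    · cases k with
      | zero => simp [hx]
      | succ k => simpa [hx] using ih k
    · have h0 : l.countP (fun x => decide (q ≤ x)) = 0 := by
        rw [List.countP_eq_zero]
        intro y hy
        have := hl.1 y hy
        simp; omega
      cases k with
      | zero => simp [hx, h0]
      | succ k =>
        have := ih k
        simpa [hx, h0] using this

theorem part_iff (lam : Multiset ℕ) (q k : ℕ) (hq : 1 ≤ q) :
    q ≤ part lam k ↔ k < Multiset.card (lam.filter fun x => q ≤ x) := by
  unfold part
  rw [getD_iff q hq _ (Multiset.pairwise_sort lam (· ≥ ·)) k]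
  rw [← Multiset.countP_eq_card_filter]
  conv_rhs => rw [← Multiset.sort_eq lam (· ≥ ·)]
  rw [Multiset.coe_countP]

theorem part_conj (lam : Multiset ℕ) (k : ℕ) :
    part (conj lam) k = Multiset.card (lam.filter fun x => k + 1 ≤ x) := by
  set f : ℕ → ℕ := fun j => Multiset.card (lam.filter fun x => j + 1 ≤ x) with hf
  have hanti : ∀ a b, a ≤ b → f b ≤ f a := by
    intro a b hab
    apply Multiset.card_le_card
    apply Multiset.monotone_filter_right
    intro x hx
    omega
  have hz : ∀ a, f a ≠ 0 → a < lam.sum := by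
    intro a ha
    rw [hf] at ha
    simp only at ha
    obtain ⟨x, hx⟩ := Multiset.card_pos_iff_exists_mem.1 (Nat.pos_of_ne_zero ha)
    rw [Multiset.mem_filter] at hx
    have := Multiset.le_sum_of_mem hx.1
    omega
  have key : ∀ q, 1 ≤ q → (q ≤ part (conj lam) k ↔ q ≤ f k) := by
    intro q hq
    rw [part_iff _ _ _ hq]
    have : Multiset.card ((conj lam).filter fun x => q ≤ x) =
        ((Finset.range lam.sum).filter fun j => q ≤ f j).card := by
      unfold conj
      rw [Multiset.filter_filter, Multiset.filter_map, Multiset.card_map, Finset.card_def,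
        Finset.filter_val]
      congr 1
      apply Multiset.filter_congr
      intro x _
      simp only [Function.comp_apply]
      change (q ≤ f x ∧ f x ≠ 0) ↔ q ≤ f x
      omega
    rw [this]
    constructor
    · intro h
      by_contra hlt
      have hsub : ((Finset.range lam.sum).filter fun j => q ≤ f j) ⊆ Finset.range k := by
        intro j hj
        rw [Finset.mem_filter] at hj
        rw [Finset.mem_range]
        by_contra hjk
        have := hanti k j (by omega)
        omega
      have := Finset.card_le_card hsub
      rw [Finset.card_range] at this
      omega
    · intro h
      have hsub : Finset.range (k+1) ⊆ ((Finset.range lam.sum).filter fun j => q ≤ f j) := by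
        intro j hj
        rw [Finset.mem_range] at hj
        have := hanti j k (by omega)
        rw [Finset.mem_filter, Finset.mem_range]
        exact ⟨hz j (by omega), by omega⟩
      have := Finset.card_le_card hsub
      rw [Finset.card_range] at this
      omega
  change part (conj lam) k = f k
  apply le_antisymm
  · by_cases h : 1 ≤ part (conj lam) k
    · exact (key _ h).1 le_rfl
    · omega
  · by_cases h : 1 ≤ f k
    · exact (key _ h).2 le_rfl
    · omega

/-! Column filling -/

/-- The filling of each column by `1, 2, 3, …`. -/
def colFill (A : SkewShape) (c : ℕ × ℕ) : ℕ :=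
  if c ∈ A.cells then c.1 - A.inner.colLen c.2 + 1 else 0

theorem colFill_mem (A : SkewShape) : A.colFill ∈ A.LRset (conj A.cols) := by
  have hv : ∀ i j, (i, j) ∈ A.cells → A.colFill (i, j) = i - A.inner.colLen j + 1 := by
    intro i j h; simp [colFill, h]
  refine ⟨⟨⟨?_, ?_, ?_⟩, ?_⟩, ?_, ?_⟩
  · rintro ⟨i, j⟩ hc; rw [hv _ _ hc]; omega
  · intro i j j' h h' hjj
    rw [hv _ _ h, hv _ _ h']
    have := A.inner.colLen_anti j j' hjj
    omega
  · intro i i' j h h' hii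
    rw [hv _ _ h, hv _ _ h']
    rw [mem_cells_col] at h h'
    omega
  · apply lattice_of A _ Prod.snd
    · rintro ⟨i, j⟩ h ⟨i', j'⟩ h' hT hj
      simp only at hj
      subst hj
      rw [hv _ _ h, hv _ _ h'] at hT
      rw [mem_cells_col] at h h'
      rw [Prod.mk.injEq]
      omega
    · rintro ⟨i, j⟩ h k hT
      rw [hv _ _ h] at hT
      have h' : (i - 1, j) ∈ A.cells := by
        rw [mem_cells_col] at h ⊢
        omega
      refine ⟨(i - 1, j), h', ?_, rfl, ?_⟩
      · rw [hv _ _ h']; omega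
      · simp only; omega
  · intro c hc; simp [colFill, hc]
  · intro k
    rw [part_conj]
    have : Multiset.card (A.cols.filter fun x => k + 1 ≤ x) =
        (A.colSet.filter fun j => k + 1 ≤ A.colLen j).card := by
      unfold cols
      rw [Multiset.filter_map, Multiset.card_map, Finset.card_def, Finset.filter_val]
      rfl
    rw [this]
    unfold content
    apply Finset.card_bij (fun c _ => c.2)
    · rintro ⟨i, j⟩ h
      rw [Finset.mem_filter] at h ⊢
      refine ⟨Finset.mem_image.2 ⟨_, h.1, rfl⟩, ?_⟩
      obtain ⟨h, hT⟩ := h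
      rw [hv _ _ h] at hT
      rw [mem_cells_col] at h
      simp only [colLen_eq]
      omega
    · rintro ⟨i, j⟩ h ⟨i', j'⟩ h' hj
      simp only at hj
      subst hj
      rw [Finset.mem_filter] at h h'
      obtain ⟨h, hT⟩ := h
      obtain ⟨h', hT'⟩ := h'
      rw [hv _ _ h] at hT
      rw [hv _ _ h'] at hT'
      rw [mem_cells_col] at h h'
      rw [Prod.mk.injEq]
      omega
    · intro j hj
      rw [Finset.mem_filter, colLen_eq] at hj
      have h' : (A.inner.colLen j + k, j) ∈ A.cells := by
        rw [mem_cells_col]; omega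
      refine ⟨(A.inner.colLen j + k, j), ?_, rfl⟩
      rw [Finset.mem_filter, hv _ _ h']
      exact ⟨h', by omega⟩

theorem colFill_le (A : SkewShape) (T : ℕ × ℕ → ℕ) (hT : A.IsSsyt T) :
    ∀ c ∈ A.cells, A.colFill c ≤ T c := by
  have : ∀ n j, (A.inner.colLen j + n, j) ∈ A.cells → n + 1 ≤ T (A.inner.colLen j + n, j) := by
    intro n j
    induction n with
    | zero => intro h; simpa using hT.1 _ h
    | succ n ih =>
      intro h
      have h' : (A.inner.colLen j + n, j) ∈ A.cells := by
        rw [mem_cells_col] at h ⊢; omega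
      have h1 := ih h'
      have h2 := hT.2.2 _ _ _ h' h (by omega)
      omega
  rintro ⟨i, j⟩ h
  have h1 := (mem_cells_col A i j).1 h
  obtain ⟨n, rfl⟩ := Nat.exists_eq_add_of_le h1.1
  have := this n j h
  simp only [colFill, h, if_true]
  omega

/-! Row filling -/

/-- Position from the right in its row. -/
def pos (A : SkewShape) (c : ℕ × ℕ) : ℕ := A.outer.rowLen c.1 - 1 - c.2

/-- The number of rows above `i` with length more than `q`. -/
def cnt (A : SkewShape) (q i : ℕ) : ℕ := Nat.count (fun r => q < A.rowLen r) i

/-- The row filling. -/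
def rowFill (A : SkewShape) (c : ℕ × ℕ) : ℕ :=
  if c ∈ A.cells then A.cnt (A.pos c) c.1 + 1 else 0

theorem pos_lt (A : SkewShape) (c : ℕ × ℕ) (hc : c ∈ A.cells) : A.pos c < A.rowLen c.1 := by
  obtain ⟨i, j⟩ := c
  rw [mem_cells_row] at hc
  simp only [pos, rowLen_eq]
  omega

theorem eq_of_pos (A : SkewShape) (c d : ℕ × ℕ) (hc : c ∈ A.cells) (hd : d ∈ A.cells)
    (h : c.1 = d.1) (hp : A.pos c = A.pos d) : c = d := by
  obtain ⟨i, j⟩ := c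
  obtain ⟨i', j'⟩ := d
  simp only at h
  subst h
  rw [mem_cells_row] at hc hd
  simp only [pos] at hp
  rw [Prod.mk.injEq]
  omega

theorem exists_pos (A : SkewShape) (i q : ℕ) (h : q < A.rowLen i) :
    ∃ c ∈ A.cells, c.1 = i ∧ A.pos c = q := by
  rw [rowLen_eq] at h
  refine ⟨(i, A.outer.rowLen i - 1 - q), ?_, rfl, ?_⟩
  · rw [mem_cells_row]; omega
  · simp only [pos]; omega

theorem cnt_mono (A : SkewShape) {q q' i i' : ℕ} (hq : q' ≤ q) (hi : i ≤ i') :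
    A.cnt q i ≤ A.cnt q' i' := by
  unfold cnt
  refine le_trans (Nat.count_monotone _ hi) ?_
  exact Nat.count_mono_left (fun {k} h => by omega)

theorem cnt_lt (A : SkewShape) {q q' i i' : ℕ} (hq : q' ≤ q) (hi : i < i')
    (h : q < A.rowLen i) : A.cnt q i < A.cnt q' i' := by
  have h1 : A.cnt q (i+1) = A.cnt q i + 1 := by
    unfold cnt; rw [Nat.count_succ, if_pos h]
  have := A.cnt_mono hq (Nat.succ_le_of_lt hi)
  simp only [Nat.succ_eq_add_one] at this
  omega

theorem exists_cnt (A : SkewShape) (q i k : ℕ) (h : k < A.cnt q i) :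
    ∃ r < i, q < A.rowLen r ∧ A.cnt q r = k := by
  induction i with
  | zero => simp [cnt] at h
  | succ i ih =>
    by_cases hk : k < A.cnt q i
    · obtain ⟨r, hr, h1⟩ := ih hk
      exact ⟨r, by omega, h1⟩
    · unfold cnt at h hk
      rw [Nat.count_succ] at h
      by_cases hq : q < A.rowLen i
      · rw [if_pos hq] at h
        exact ⟨i, by omega, hq, by unfold cnt; omega⟩
      · rw [if_neg hq] at h
        omega

theorem rowFill_eq (A : SkewShape) (c : ℕ × ℕ) (hc : c ∈ A.cells) :
    A.rowFill c = A.cnt (A.pos c) c.1 + 1 := by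
  simp [rowFill, hc]

theorem rowFill_inj (A : SkewShape) : ∀ c ∈ A.cells, ∀ d ∈ A.cells,
    A.rowFill c = A.rowFill d → A.pos c = A.pos d → c = d := by
  intro c hc d hd hT hp
  rw [rowFill_eq A c hc, rowFill_eq A d hd, hp] at hT
  apply eq_of_pos A c d hc hd _ hp
  have h1 := A.pos_lt c hc
  have h2 := A.pos_lt d hd
  rw [hp] at h1
  rcases lt_trichotomy c.1 d.1 with h | h | h
  · have := A.cnt_lt le_rfl h h1; omega
  · exact h
  · have := A.cnt_lt le_rfl h h2; omega

theorem card_rows_filter (A : SkewShape) (q n : ℕ) (hn : ∀ i ∈ A.rowSet, i < n) :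
    Multiset.card (A.rows.filter fun x => q + 1 ≤ x) = A.cnt q n := by
  unfold rows cnt
  rw [Multiset.filter_map, Multiset.card_map, Nat.count_eq_card_filter_range]
  rw [← Finset.filter_val, ← Finset.card_def]
  congr 1
  ext i
  simp only [Finset.mem_filter, Function.comp_apply, Finset.mem_range]
  constructor
  · rintro ⟨h, h'⟩; exact ⟨hn i h, h'⟩
  · rintro ⟨h, h'⟩
    obtain ⟨c, hc, rfl, _⟩ := A.exists_pos i q h'
    exact ⟨Finset.mem_image.2 ⟨c, hc, rfl⟩, h'⟩

theorem rowFill_mem (A : SkewShape) : A.rowFill ∈ A.LRset A.rows := by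
  refine ⟨⟨⟨?_, ?_, ?_⟩, ?_⟩, ?_, ?_⟩
  · intro c hc; rw [rowFill_eq A c hc]; omega
  · intro i j j' h h' hjj
    rw [rowFill_eq A _ h, rowFill_eq A _ h']
    have := A.cnt_mono (q := A.pos (i,j)) (q' := A.pos (i,j')) (i := i) (i' := i)
      (by simp only [pos]; omega) le_rfl
    simpa using this
  · intro i i' j h h' hii
    rw [rowFill_eq A _ h, rowFill_eq A _ h']
    have := A.cnt_lt (q := A.pos (i,j)) (q' := A.pos (i',j)) (i := i) (i' := i')
      (by simp only [pos]; have := A.outer.rowLen_anti i i' hii.le; omega) hii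
      (A.pos_lt _ h)
    simpa using this
  · apply lattice_of A _ A.pos A.rowFill_inj
    intro c hc k hT
    rw [rowFill_eq A c hc] at hT
    obtain ⟨r, hr, hlt, hk⟩ := A.exists_cnt (A.pos c) c.1 k (by omega)
    obtain ⟨e, he, rfl, hp⟩ := A.exists_pos r _ hlt
    refine ⟨e, he, ?_, hp, hr⟩
    rw [rowFill_eq A e he, hp, hk]
  · intro c hc; simp [rowFill, hc]
  · intro k
    obtain ⟨n, hn⟩ : ∃ n, ∀ i ∈ A.rowSet, i < n :=
      ⟨A.rowSet.sup id + 1, fun i hi => Nat.lt_succ_of_le (Finset.le_sup (f := id) hi)⟩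
    have hiff : ∀ q, q < part A.rows k ↔ k < A.cnt q n := by
      intro q
      rw [← card_rows_filter A q n hn, ← part_iff _ _ _ (by omega)]
      omega
    rw [← Finset.card_range (part A.rows k)]
    unfold content
    apply Finset.card_bij (fun c _ => A.pos c)
    · intro c h
      rw [Finset.mem_filter] at h
      rw [Finset.mem_range, hiff]
      have h1 := A.cnt_lt (le_refl (A.pos c)) (hn c.1 (Finset.mem_image.2 ⟨c, h.1, rfl⟩))
        (A.pos_lt c h.1)
      rw [rowFill_eq A c h.1] at h
      omega
    · intro c h d h' hp
      rw [Finset.mem_filter] at h h'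
      exact A.rowFill_inj c h.1 d h'.1 (h.2.trans h'.2.symm) hp
    · intro q hq
      rw [Finset.mem_range, hiff] at hq
      obtain ⟨r, hr, hlt, hk⟩ := A.exists_cnt q n k hq
      obtain ⟨e, he, rfl, hp⟩ := A.exists_pos r _ hlt
      refine ⟨e, ?_, hp⟩
      rw [Finset.mem_filter, rowFill_eq A e he, hp, hk]
      exact ⟨he, rfl⟩

/-- Number of entries `k` read weakly before `c`. -/
def num (A : SkewShape) (T : ℕ × ℕ → ℕ) (k : ℕ) (c : ℕ × ℕ) : ℕ :=
  (A.cells.filter fun e => T e = k ∧ ReadsBefore e c).card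

theorem num_anti (A : SkewShape) (T : ℕ × ℕ → ℕ) (hT : A.IsLR T) (d : ℕ × ℕ) (hd : d ∈ A.cells)
    (k l : ℕ) (hk : 1 ≤ k) (hkl : k ≤ l) : A.num T l d ≤ A.num T k d := by
  induction l, hkl using Nat.le_induction with
  | base => exact le_rfl
  | succ l hl ih =>
    obtain ⟨m, rfl⟩ := Nat.exists_eq_add_of_le' (le_trans hk hl)
    exact le_trans (hT.2 d hd m) ih

theorem num_lt (A : SkewShape) (T : ℕ × ℕ → ℕ) (c d : ℕ × ℕ) (hc : c ∈ A.cells)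
    (h : ReadsBefore d c) (hne : d ≠ c) : A.num T (T c) d < A.num T (T c) c := by
  unfold num
  apply Finset.card_lt_card
  rw [Finset.ssubset_iff_of_subset]
  · refine ⟨c, ?_, ?_⟩
    · exact Finset.mem_filter.2 ⟨hc, rfl, Or.inr ⟨rfl, le_rfl⟩⟩
    · rw [Finset.mem_filter]
      rintro ⟨_, _, h'⟩
      apply hne
      unfold ReadsBefore at h h'
      ext <;> omega
  · intro e
    simp only [Finset.mem_filter]
    rintro ⟨h1, h2, h3⟩
    refine ⟨h1, h2, ?_⟩
    unfold ReadsBefore at *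
    omega

theorem pos_lt_rank (A : SkewShape) (T : ℕ × ℕ → ℕ) (hT : A.IsLR T) :
    ∀ q, ∀ c ∈ A.cells, A.pos c = q → q + 1 ≤ A.num T (T c) c := by
  intro q
  induction q with
  | zero =>
    intro c hc _
    refine Nat.succ_le_of_lt (Finset.card_pos.2 ⟨c, ?_⟩)
    exact Finset.mem_filter.2 ⟨hc, rfl, Or.inr ⟨rfl, le_rfl⟩⟩
  | succ q ih =>
    rintro ⟨i, j⟩ hc hp
    have hc' := (mem_cells_row A i j).1 hc
    simp only [pos] at hp
    have hd : (i, j + 1) ∈ A.cells := by rw [mem_cells_row]; omega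
    have h1 := ih (i, j + 1) hd (by simp only [pos]; omega)
    have h2 := hT.1.2.1 i j (j+1) hc hd (by omega)
    have h3 := num_anti A T hT _ hd _ _ (hT.1.1 _ hc) h2
    have h4 := num_lt A T (i, j) (i, j+1) hc (by simp [ReadsBefore]) (by simp)
    omega

theorem sum_rank (A : SkewShape) (T : ℕ × ℕ → ℕ) :
    2 * ∑ c ∈ A.cells, A.num T (T c) c = ∑ c ∈ A.cells, (A.content T (T c) + 1) := by
  have h1 : ∑ c ∈ A.cells, A.num T (T c) c =
      ∑ c ∈ A.cells, ∑ e ∈ A.cells, if T e = T c ∧ ReadsBefore e c then 1 else 0 := by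
    apply Finset.sum_congr rfl
    intro c _
    rw [num, Finset.card_filter]
  have h2 := h1
  rw [Finset.sum_comm] at h2
  rw [two_mul]
  nth_rewrite 1 [h1]
  rw [h2, ← Finset.sum_add_distrib]
  apply Finset.sum_congr rfl
  intro c hc
  have h3 : (1:ℕ) = ∑ e ∈ A.cells, if e = c then 1 else 0 := by
    rw [Finset.sum_ite_eq' A.cells c]; simp [hc]
  conv_rhs => rw [h3]
  rw [content, Finset.card_filter, ← Finset.sum_add_distrib, ← Finset.sum_add_distrib]
  apply Finset.sum_congr rfl
  intro e _
  by_cases hec : e = c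
  · subst hec; simp [ReadsBefore]
  · have hcomp : (ReadsBefore e c ∧ ¬ ReadsBefore c e) ∨ (ReadsBefore c e ∧ ¬ ReadsBefore e c) := by
      have : e.1 ≠ c.1 ∨ e.2 ≠ c.2 := by
        by_contra hcon
        apply hec
        ext <;> omega
      unfold ReadsBefore
      omega
    by_cases hTe : T e = T c
    · rcases hcomp with h | h <;> simp [hTe, h, hec]
    · simp [hTe, hec, Ne.symm hTe]

theorem rank_rowFill_le (A : SkewShape) (c : ℕ × ℕ) (hc : c ∈ A.cells) :
    A.num A.rowFill (A.rowFill c) c ≤ A.pos c + 1 := by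
  unfold num
  rw [← Finset.card_range (A.pos c + 1)]
  apply Finset.card_le_card_of_injOn A.pos
  · intro e he
    simp only [Finset.coe_filter, Set.mem_ofPred_eq] at he
    obtain ⟨he, hT, hr⟩ := he
    simp only [Finset.coe_range, Set.mem_Iio]
    by_contra hcon
    rcases hr with hr | ⟨hr, hr'⟩
    · rw [rowFill_eq A e he, rowFill_eq A c hc] at hT
      have := A.cnt_lt (q := A.pos e) (q' := A.pos c) (by omega) hr (A.pos_lt e he)
      omega
    · simp only [pos, hr] at hcon
      omega
  · intro x hx y hy hp
    simp only [Finset.coe_filter, Set.mem_ofPred_eq] at hx hy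
    exact A.rowFill_inj x hx.1 y hy.1 (hx.2.1.trans hy.2.1.symm) hp

theorem rank_eq (A : SkewShape) (T : ℕ × ℕ → ℕ) (hT : T ∈ A.LRset A.rows) :
    ∀ c ∈ A.cells, A.num T (T c) c = A.pos c + 1 := by
  have hcont := content_eq_of_LRset A _ _ _ hT A.rowFill_mem
  have h1 := sum_rank A T
  have h2 := sum_rank A A.rowFill
  have h3 := sum_eq_of_content A T A.rowFill hcont (fun k => A.content T k + 1)
  have h4 : A.content T = A.content A.rowFill := funext hcont
  simp only [h4] at h1 h3
  have h5 := Finset.sum_le_sum (A.rank_rowFill_le)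
  have h6 : ∀ c ∈ A.cells, A.pos c + 1 ≤ A.num T (T c) c :=
    fun c hc => pos_lt_rank A T hT.1 _ c hc rfl
  have h7 := Finset.sum_le_sum h6
  intro c hc
  exact ((Finset.sum_eq_sum_iff_of_le h6).1 (by omega) c hc).symm

theorem le_rowFill (A : SkewShape) (T : ℕ × ℕ → ℕ) (hT : T ∈ A.LRset A.rows) :
    ∀ n, ∀ c ∈ A.cells, T c = n + 1 → n + 1 ≤ A.rowFill c := by
  have hrank := rank_eq A T hT
  intro n
  induction n with
  | zero => intro c hc _; rw [rowFill_eq A c hc]; omega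
  | succ k ih =>
    intro c hc hTc
    have hle := hT.1.2 c hc k
    have hr := hrank c hc
    rw [hTc] at hr
    unfold num at hr
    set S := A.cells.filter fun e => T e = k + 1 ∧ ReadsBefore e c with hS
    have hinj : Set.InjOn A.pos (S : Set (ℕ × ℕ)) := by
      intro x hx y hy hp
      simp only [hS, Finset.coe_filter, Set.mem_ofPred_eq] at hx hy
      by_contra hne
      have hx1 := hrank x hx.1
      have hy1 := hrank y hy.1
      have : ReadsBefore x y ∨ ReadsBefore y x := by unfold ReadsBefore; omega
      rcases this with h | h
      · have := num_lt A T y x hy.1 h hne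
        rw [hy.2.1] at this hy1
        rw [hx.2.1] at hx1
        omega
      · have := num_lt A T x y hx.1 h (Ne.symm hne)
        rw [hx.2.1] at this hx1
        rw [hy.2.1] at hy1
        omega
    have hsub : S.image A.pos ⊆ Finset.range S.card := by
      intro q hq
      obtain ⟨e, he, rfl⟩ := Finset.mem_image.1 hq
      rw [hS, Finset.mem_filter] at he
      have h1 := hrank e he.1
      rw [Finset.mem_range]
      have h2 : A.num T (T e) e ≤ S.card := by
        apply Finset.card_le_card
        intro f hf
        rw [Finset.mem_filter] at hf
        rw [hS, Finset.mem_filter]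
        refine ⟨hf.1, hf.2.1.trans he.2.1, ?_⟩
        have h3 := hf.2.2
        have h4 := he.2.2
        unfold ReadsBefore at *
        omega
      omega
    have heq := Finset.eq_of_subset_of_card_le hsub (by
      rw [Finset.card_range, Finset.card_image_of_injOn hinj])
    have hmem : A.pos c ∈ S.image A.pos := by
      rw [heq, Finset.mem_range]
      have : k + 1 + 1 = k + 2 := rfl
      rw [this] at hr
      omega
    obtain ⟨e, he, hp⟩ := Finset.mem_image.1 hmem
    rw [hS, Finset.mem_filter] at he
    obtain ⟨he, hTe, hre⟩ := he
    have h1 := ih e he hTe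
    have hlt : e.1 < c.1 := by
      rcases hre with h | ⟨h, _⟩
      · exact h
      · have := eq_of_pos A e c he hc h hp
        subst this
        omega
    have h2 := A.cnt_lt (q := A.pos e) (q' := A.pos c) (by omega) hlt (A.pos_lt e he)
    rw [rowFill_eq A e he] at h1
    rw [rowFill_eq A c hc]
    omega

end SkewShape

/-- For any skew shape `A`, there is exactly one LR filling of `A`
with content `rows A`, and exactly one LR filling of `A` with content
`(cols A)ᵗ`; in particular, the Schur functions indexed by `rows A` and by
`(cols A)ᵗ` each appear with coefficient exactly 1 in the Schur expansion of
`s_A`. -/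
theorem unique_LR_filling_extreme_contents (A : SkewShape) :
    (∃! T : ℕ × ℕ → ℕ, T ∈ A.LRset A.rows) ∧
    (∃! T : ℕ × ℕ → ℕ, T ∈ A.LRset (conj A.cols)) ∧
    (A.LRset A.rows).ncard = 1 ∧ (A.LRset (conj A.cols)).ncard = 1 := by
  have h1 : ∀ T ∈ A.LRset A.rows, T = A.rowFill := by
    intro T hT
    refine SkewShape.eq_of_le A _ _ _ hT A.rowFill_mem ?_
    intro c hc
    obtain ⟨n, hn⟩ := Nat.exists_eq_add_of_le' (hT.1.1.1 c hc)
    rw [hn]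
    exact A.le_rowFill T hT n c hc hn
  have h2 : ∀ T ∈ A.LRset (conj A.cols), T = A.colFill := by
    intro T hT
    exact (SkewShape.eq_of_le A _ _ _ A.colFill_mem hT (A.colFill_le T hT.1.1)).symm
  refine ⟨⟨_, A.rowFill_mem, h1⟩, ⟨_, A.colFill_mem, h2⟩, ?_, ?_⟩
  · rw [Set.ncard_eq_one]
    exact ⟨_, Set.eq_singleton_iff_unique_mem.2 ⟨A.rowFill_mem, h1⟩⟩
  · rw [Set.ncard_eq_one]
    exact ⟨_, Set.eq_singleton_iff_unique_mem.2 ⟨A.colFill_mem, h2⟩⟩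
end

section
/- If A is a ribbon that is not row equitable, then there exists a row equitable ribbon R of the same size such that s_R − s_A is Schur-positive and supp(A) is strictly contained in supp(R). -/
namespace RibW

/-- Add a box in row `i`. -/
def ad (μ : ℕ → ℕ) (i : ℕ) : ℕ → ℕ := fun j => if j = i then μ j + 1 else μ j

def Par (μ : ℕ → ℕ) : Prop := ∀ j, μ (j + 1) ≤ μ j

def Ok (μ : ℕ → ℕ) (i : ℕ) : Prop := ∀ j, i = j + 1 → μ i < μ j

def LW : (ℕ → ℕ) → List ℕ → Prop
  | _, [] => True
  | μ, i :: w => Ok μ i ∧ LW (ad μ i) w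

def fn (μ : ℕ → ℕ) (w : List ℕ) : ℕ → ℕ := w.foldl ad μ

def so (lam : ℕ → ℕ) (h i : ℕ) : ℕ := if i = h + 1 ∧ lam h = lam (h + 1) + 1 then h else i

def sh (lam : ℕ → ℕ) (h i : ℕ) : ℕ := if i = h + 1 ∧ lam h = lam (h + 1) + 1 then h + 1 else h

def slO : (ℕ → ℕ) → ℕ → List ℕ → List ℕ
  | _, _, [] => []
  | lam, h, i :: w => so lam h i :: slO (ad lam i) (sh lam h i) w

def slH : (ℕ → ℕ) → ℕ → List ℕ → ℕ
  | _, h, [] => h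
  | lam, h, i :: w => slH (ad lam i) (sh lam h i) w

def des : List ℕ → List Bool
  | [] => []
  | [_] => []
  | a :: b :: l => decide (a < b) :: des (b :: l)

theorem fn_nil (μ : ℕ → ℕ) : fn μ [] = μ := rfl
theorem fn_cons (μ : ℕ → ℕ) (i : ℕ) (w : List ℕ) : fn μ (i :: w) = fn (ad μ i) w := rfl
theorem fn_append (μ : ℕ → ℕ) (v w : List ℕ) : fn μ (v ++ w) = fn (fn μ v) w := by
  simp [fn]

theorem LW_append (μ : ℕ → ℕ) (v w : List ℕ) : LW μ (v ++ w) ↔ LW μ v ∧ LW (fn μ v) w := by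
  induction v generalizing μ with
  | nil => simp [LW, fn]
  | cons a v ih => simp [LW, ih, fn_cons, and_assoc]

theorem Par_ad {μ : ℕ → ℕ} {i : ℕ} (h : Par μ) (hi : Ok μ i) : Par (ad μ i) := by
  intro j
  have := h j
  have := hi j
  unfold ad
  grind

theorem Par_fn {μ : ℕ → ℕ} {w : List ℕ} (h : Par μ) (hi : LW μ w) : Par (fn μ w) := by
  induction w generalizing μ with
  | nil => exact h
  | cons a v ih => exact ih (Par_ad h hi.1) hi.2

theorem Par_zero : Par (fun _ => 0) := fun _ => le_rfl

theorem ad_comm (μ : ℕ → ℕ) (a b : ℕ) : ad (ad μ a) b = ad (ad μ b) a := by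
  funext j; simp only [ad]; grind

theorem ad_inj {μ ν : ℕ → ℕ} {a : ℕ} (h : ad μ a = ad ν a) : μ = ν := by
  funext j; have := congrFun h j; simp only [ad] at this; grind

theorem fn_ad (μ : ℕ → ℕ) (a : ℕ) (w : List ℕ) : fn (ad μ a) w = ad (fn μ w) a := by
  induction w generalizing μ with
  | nil => rfl
  | cons b v ih => rw [fn_cons, ad_comm, ih, fn_cons]

theorem step_spec {ρ : ℕ → ℕ} {h i : ℕ} (hρ : Par ρ) (hh : Ok ρ h) (hi : Ok (ad ρ h) i) :
    Ok ρ (so (ad ρ h) h i) ∧ Ok (ad ρ (so (ad ρ h) h i)) (sh (ad ρ h) h i) ∧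
    ad (ad ρ (so (ad ρ h) h i)) (sh (ad ρ h) h i) = ad (ad ρ h) i ∧
    so (ad ρ (so (ad ρ h) h i)) (so (ad ρ h) h i) (sh (ad ρ h) h i) = h ∧
    sh (ad ρ (so (ad ρ h) h i)) (so (ad ρ h) h i) (sh (ad ρ h) h i) = i := by
  by_cases hc : i = h + 1 ∧ ad ρ h h = ad ρ h (h + 1) + 1
  · have h1 : so (ad ρ h) h i = h := by simp only [so, if_pos hc]
    have h2 : sh (ad ρ h) h i = h + 1 := by simp only [sh, if_pos hc]
    rw [h1, h2, ← hc.1]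
    refine ⟨hh, hi, rfl, h1, ?_⟩
    rw [h2, hc.1]
  · have h1 : so (ad ρ h) h i = i := by simp only [so, if_neg hc]
    have h2 : sh (ad ρ h) h i = h := by simp only [sh, if_neg hc]
    rw [h1, h2]
    have hp := hρ h
    have hc' : ¬ (h = i + 1 ∧ ad ρ i i = ad ρ i (i + 1) + 1) := by
      have := hh i
      simp [ad]; grind
    refine ⟨?_, ?_, ad_comm _ _ _, ?_, ?_⟩
    · intro j hj
      have := hi j hj
      simp [ad] at this hc
      grind
    · intro j hj
      have := hi j
      have := hh j hj
      simp [ad] at *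
      grind
    · simp only [so, if_neg hc']
    · simp only [sh, if_neg hc']

/-- sliding keeps the lattice property -/
theorem slide_spec {ρ : ℕ → ℕ} {h : ℕ} {w : List ℕ} (hρ : Par ρ) (hh : Ok ρ h)
    (hw : LW (ad ρ h) w) :
    LW ρ (slO (ad ρ h) h w) ∧ Ok (fn ρ (slO (ad ρ h) h w)) (slH (ad ρ h) h w) ∧
    ad (fn ρ (slO (ad ρ h) h w)) (slH (ad ρ h) h w) = fn (ad ρ h) w := by
  induction w generalizing ρ h with
  | nil => exact ⟨trivial, hh, rfl⟩
  | cons i v ih =>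
    obtain ⟨h1, h2, h3, -, -⟩ := step_spec hρ hh hw.1
    have hv := hw.2
    rw [← h3] at hv
    obtain ⟨a, b, c⟩ := ih (Par_ad hρ h1) h2 hv
    simp only [slO, slH, LW, fn_cons]
    rw [← h3]
    exact ⟨⟨h1, a⟩, b, c⟩

theorem slO_length (lam : ℕ → ℕ) (h : ℕ) (w : List ℕ) : (slO lam h w).length = w.length := by
  induction w generalizing lam h with
  | nil => rfl
  | cons i v ih => simp [slO, ih]

theorem slO_append (lam : ℕ → ℕ) (h : ℕ) (v w : List ℕ) :
    slO lam h (v ++ w) = slO lam h v ++ slO (fn lam v) (slH lam h v) w := by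
  induction v generalizing lam h with
  | nil => rfl
  | cons i v ih => simp [slO, slH, fn_cons, ih]

theorem slH_append (lam : ℕ → ℕ) (h : ℕ) (v w : List ℕ) :
    slH lam h (v ++ w) = slH (fn lam v) (slH lam h v) w := by
  induction v generalizing lam h with
  | nil => rfl
  | cons i v ih => simp [slH, fn_cons, ih]

theorem slH_mono (lam : ℕ → ℕ) {h h' : ℕ} (w : List ℕ) (hh : h ≤ h') :
    slH lam h w ≤ slH lam h' w := by
  induction w generalizing lam h h' with
  | nil => exact hh
  | cons i v ih =>
    apply ih
    unfold sh
    grind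

theorem des_step {ρ : ℕ → ℕ} {h i i' : ℕ} (hρ : Par ρ) (hh : Ok ρ h) (hi : Ok (ad ρ h) i)
    (hi' : Ok (ad (ad ρ h) i) i') :
    so (ad ρ h) h i < so (ad (ad ρ h) i) (sh (ad ρ h) h i) i' ↔ i < i' := by
  have hp := hρ h
  have hp1 := hρ (h + 1)
  have hp2 := hi h
  have hp3 := hi' h
  have hp4 := hi' (h + 1)
  simp only [so, sh, ad] at *
  grind

theorem des_slO {ρ : ℕ → ℕ} {h : ℕ} {w : List ℕ} (hρ : Par ρ) (hh : Ok ρ h)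
    (hw : LW (ad ρ h) w) : des (slO (ad ρ h) h w) = des w := by
  induction w generalizing ρ h with
  | nil => rfl
  | cons i v ih =>
    obtain ⟨h1, h2, h3, -, -⟩ := step_spec hρ hh hw.1
    cases v with
    | nil => rfl
    | cons i' v =>
      have hv := hw.2
      have h4 := des_step hρ hh hw.1 hv.1
      rw [← h3] at hv
      have := ih (Par_ad hρ h1) h2 hv
      rw [h3] at this
      simp only [slO, des] at this ⊢
      rw [this]
      simp only [h4]

theorem hole_step {ρ : ℕ → ℕ} {h k i : ℕ} (hρ : Par ρ) (hh : Ok ρ h) (hk : Ok (ad ρ h) k)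
    (hi : Ok (ad (ad ρ h) k) i) :
    sh (ad ρ h) h (so (ad (ad ρ h) k) k i) < sh (ad (ad ρ h) k) k i ↔ h < k := by
  have hp := hρ h
  have hp1 := hρ (h + 1)
  have hp2 := hρ k
  have hp3 := hk h
  have hp4 := hi h
  have hp5 := hi k
  have hp6 := hh k
  simp only [so, sh, ad] at *
  grind

theorem hole_slide {ρ : ℕ → ℕ} {h k : ℕ} {w : List ℕ} (hρ : Par ρ) (hh : Ok ρ h)
    (hk : Ok (ad ρ h) k) (hw : LW (ad (ad ρ h) k) w) :
    slH (ad ρ h) h (slO (ad (ad ρ h) k) k w) < slH (ad (ad ρ h) k) k w ↔ h < k := by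
  induction w generalizing ρ h k with
  | nil => rfl
  | cons i v ih =>
    obtain ⟨h1, h2, h3, -, -⟩ := step_spec (Par_ad hρ hh) hk hw.1
    obtain ⟨k1, k2, k3, -, -⟩ := step_spec hρ hh h1
    have h4 := hole_step hρ hh hk hw.1
    have hv := hw.2
    rw [← h3, ← k3] at hv
    rw [← k3] at h2
    have := ih (Par_ad hρ k1) k2 h2 hv
    rw [h4] at this
    simp only [slO, slH]
    rw [← h3, ← k3]
    exact this

end RibW

namespace RibW

def Z : ℕ → ℕ := fun _ => 0

def Lat (w : List ℕ) : Prop := LW Z w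

def bb : List ℕ → ℕ
  | [] => 0
  | x :: v => slH (ad Z x) x v

def ou : List ℕ → List ℕ
  | [] => []
  | x :: v => slO (ad Z x) x v

theorem ou_length (w : List ℕ) : (ou w).length = w.length - 1 := by
  cases w <;> simp [ou, slO_length]

def evac (w : List ℕ) : List ℕ :=
  if h : w = [] then [] else evac (ou w) ++ [bb w]
termination_by w.length
decreasing_by
  rw [ou_length]
  have := List.length_pos_iff.mpr h
  omega

theorem evac_nil : evac [] = [] := by rw [evac]; simp

theorem evac_ne {w : List ℕ} (h : w ≠ []) : evac w = evac (ou w) ++ [bb w] := by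
  rw [evac]; simp [h]

theorem Par_Z : Par Z := Par_zero

theorem Lat_append (v w : List ℕ) : Lat (v ++ w) ↔ Lat v ∧ LW (fn Z v) w := LW_append _ _ _

theorem Lat_snoc (v : List ℕ) (e : ℕ) : Lat (v ++ [e]) ↔ Lat v ∧ Ok (fn Z v) e := by
  rw [Lat_append]; simp [LW]

theorem fn_snoc (μ : ℕ → ℕ) (v : List ℕ) (e : ℕ) : fn μ (v ++ [e]) = ad (fn μ v) e := by
  rw [fn_append]; rfl

theorem Lat_ou {w : List ℕ} (hw : Lat w) (h : w ≠ []) :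
    Lat (ou w) ∧ Ok (fn Z (ou w)) (bb w) ∧ ad (fn Z (ou w)) (bb w) = fn Z w := by
  cases w with
  | nil => exact absurd rfl h
  | cons x v => exact slide_spec Par_Z hw.1 hw.2

theorem ou_append {w : List ℕ} (h : w ≠ []) (v : List ℕ) :
    ou (w ++ v) = ou w ++ slO (fn Z w) (bb w) v := by
  cases w with
  | nil => exact absurd rfl h
  | cons x w => simp [ou, bb, slO_append, fn_cons]

theorem bb_append {w : List ℕ} (h : w ≠ []) (v : List ℕ) :
    bb (w ++ v) = slH (fn Z w) (bb w) v := by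
  cases w with
  | nil => exact absurd rfl h
  | cons x w => simp [bb, slH_append, fn_cons]

theorem ou_snoc {w : List ℕ} (h : w ≠ []) (e : ℕ) :
    ou (w ++ [e]) = ou w ++ [so (fn Z w) (bb w) e] := by
  rw [ou_append h]; rfl

theorem bb_snoc {w : List ℕ} (h : w ≠ []) (e : ℕ) :
    bb (w ++ [e]) = sh (fn Z w) (bb w) e := by
  rw [bb_append h]; rfl

theorem des_tail (w : List ℕ) : des w.tail = (des w).tail := by
  rcases w with _ | ⟨a, _ | ⟨b, l⟩⟩ <;> simp [des]

theorem des_ou {w : List ℕ} (hw : Lat w) : des (ou w) = (des w).tail := by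
  cases w with
  | nil => rfl
  | cons x v =>
    rw [← des_tail]
    exact des_slO Par_Z hw.1 hw.2

theorem Ok_Z {i : ℕ} (h : Ok Z i) : i = 0 := by
  rcases i with _ | i
  · rfl
  · exact absurd (h i rfl) (by simp [Z])

theorem bb_ou {x y : ℕ} {v : List ℕ} (hw : Lat (x :: y :: v)) :
    bb (ou (x :: y :: v)) < bb (x :: y :: v) ↔ x < y := by
  obtain ⟨hx, hy, hv⟩ := hw
  obtain ⟨h1, h2, h3, -, -⟩ := step_spec Par_Z hx hy
  have hv' := hv
  rw [← h3] at hv'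
  have := hole_slide Par_Z h1 h2 hv'
  rw [h3] at this
  simp only [ou, bb, slO, slH]
  rw [this]
  have := Ok_Z hx
  subst this
  have a1 := hy 0
  have a2 := hy (y - 1)
  clear h1 h2 h3 hv hv' hx
  simp only [so, sh, ad, Z] at *
  grind

theorem evac_length (w : List ℕ) : (evac w).length = w.length := by
  induction hn : w.length generalizing w with
  | zero => rw [List.length_eq_zero_iff] at hn; subst hn; simp [evac_nil]
  | succ n ih =>
    have hw : w ≠ [] := by rintro rfl; simp at hn
    rw [evac_ne hw, List.length_append, ih (ou w) (by rw [ou_length]; omega)]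
    rfl

theorem evac_ne_nil {w : List ℕ} (h : w ≠ []) : evac w ≠ [] := by
  rw [← List.length_pos_iff, evac_length, List.length_pos_iff]; exact h

theorem evac_spec {w : List ℕ} (hw : Lat w) : Lat (evac w) ∧ fn Z (evac w) = fn Z w := by
  induction hn : w.length generalizing w with
  | zero => rw [List.length_eq_zero_iff] at hn; subst hn; simp [evac_nil, Lat, LW]
  | succ n ih =>
    have hne : w ≠ [] := by rintro rfl; simp at hn
    obtain ⟨h1, h2, h3⟩ := Lat_ou hw hne
    obtain ⟨h4, h5⟩ := ih h1 (by rw [ou_length]; omega)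
    rw [evac_ne hne, Lat_snoc, fn_snoc, h5]
    exact ⟨⟨h4, h2⟩, h3⟩

/-- the fundamental duality of evacuation -/
theorem evac_dual {w : List ℕ} {e : ℕ} (hw : Lat (w ++ [e])) :
    bb (evac (w ++ [e])) = e ∧ ou (evac (w ++ [e])) = evac w := by
  induction hn : w.length generalizing w e with
  | zero =>
    rw [List.length_eq_zero_iff] at hn; subst hn
    have : e = 0 := Ok_Z hw.1
    subst this
    simp [evac_ne, evac_nil, ou, bb, slO, slH]
  | succ n ih =>
    have hne : w ≠ [] := by rintro rfl; simp at hn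
    have hne' : w ++ [e] ≠ [] := by simp
    rw [Lat_snoc] at hw
    obtain ⟨h1, h2, h3⟩ := Lat_ou hw.1 hne
    have hp := Par_fn Par_Z h1
    have he := hw.2
    rw [← h3] at he
    obtain ⟨k1, k2, k3, k4, k5⟩ := step_spec hp h2 he
    have ho := ou_snoc hne e
    have hb := bb_snoc hne e
    rw [← h3] at ho hb
    have hl : Lat (ou w ++ [so (ad (fn Z (ou w)) (bb w)) (bb w) e]) := by
      rw [Lat_snoc]; exact ⟨h1, k1⟩
    obtain ⟨i1, i2⟩ := ih hl (by rw [ou_length]; omega)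
    have hfe := (evac_spec hl).2
    rw [fn_snoc] at hfe
    have hne2 : evac (ou w ++ [so (ad (fn Z (ou w)) (bb w)) (bb w) e]) ≠ [] :=
      evac_ne_nil (by simp)
    rw [evac_ne hne', ho, hb, bb_snoc hne2, ou_snoc hne2, i1, i2, hfe, k4, k5]
    exact ⟨rfl, (evac_ne hne).symm⟩

theorem snoc_cases {w : List ℕ} (h : w ≠ []) : ∃ v e, w = v ++ [e] :=
  ⟨w.dropLast, w.getLast h, (List.dropLast_append_getLast h).symm⟩

theorem evac_evac {w : List ℕ} (hw : Lat w) : evac (evac w) = w := by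
  induction hn : w.length generalizing w with
  | zero => rw [List.length_eq_zero_iff] at hn; subst hn; simp [evac_nil]
  | succ n ih =>
    have hne : w ≠ [] := by rintro rfl; simp at hn
    obtain ⟨v, e, rfl⟩ := snoc_cases hne
    obtain ⟨h1, h2⟩ := evac_dual hw
    rw [evac_ne (evac_ne_nil hne), h1, h2, ih ((Lat_snoc _ _).1 hw).1 (by simpa using hn)]

/-- last letter -/
def la (w : List ℕ) : ℕ := w.getLastD 0

theorem la_snoc (w : List ℕ) (e : ℕ) : la (w ++ [e]) = e := by simp [la]

theorem bb_evac {w : List ℕ} (hw : Lat w) (hne : w ≠ []) : bb (evac w) = la w := by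
  obtain ⟨v, e, rfl⟩ := snoc_cases hne
  rw [(evac_dual hw).1, la_snoc]

theorem la_evac {w : List ℕ} (hne : w ≠ []) : la (evac w) = bb w := by
  rw [evac_ne hne, la_snoc]

theorem des_append {v : List ℕ} (hv : v ≠ []) (x : ℕ) (w : List ℕ) :
    des (v ++ x :: w) = des v ++ decide (la v < x) :: des (x :: w) := by
  induction v with
  | nil => exact absurd rfl hv
  | cons a v ih =>
    cases v with
    | nil => simp [des, la]
    | cons b v =>
      have := ih (by simp)
      simp only [List.cons_append, des] at this ⊢
      rw [this]
      simp [la]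

theorem des_snoc {v : List ℕ} (hv : v ≠ []) (x : ℕ) :
    des (v ++ [x]) = des v ++ [decide (la v < x)] := by
  rw [des_append hv]; rfl

theorem des_length (w : List ℕ) : (des w).length = w.length - 1 := by
  induction w with
  | nil => rfl
  | cons a w ih => cases w <;> simp_all [des]

theorem des_evac {w : List ℕ} (hw : Lat w) : des (evac w) = (des w).reverse := by
  induction hn : w.length generalizing w with
  | zero => rw [List.length_eq_zero_iff] at hn; subst hn; simp [evac_nil, des]
  | succ n ih =>
    rcases w with _ | ⟨x, _ | ⟨y, v⟩⟩
    · simp at hn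
    · simp [evac_ne, evac_nil, ou, slO, des]
    · have hne : ou (x :: y :: v) ≠ [] := by
        rw [← List.length_pos_iff, ou_length]; simp
      have h1 := Lat_ou hw (by simp)
      rw [evac_ne (by simp), des_snoc (evac_ne_nil hne), la_evac hne,
        ih h1.1 (by rw [ou_length]; omega), des_ou hw]
      simp only [bb_ou hw, des, List.tail_cons, List.reverse_cons]

end RibW

namespace RibW

def core (w : List ℕ) : List ℕ := ou w.dropLast

def build (u : List ℕ) (e f : ℕ) : List ℕ := evac (evac u ++ [f]) ++ [e]

theorem Ok_ad {μ : ℕ → ℕ} {e f : ℕ} (hf : Ok μ f) (hne : e ≠ f) : Ok (ad μ e) f := by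
  intro j hj
  have := hf j hj
  simp only [ad]; grind

theorem decomp {w : List ℕ} (hw : Lat w) (hl : 2 ≤ w.length) (hne : la w ≠ bb w) :
    Lat (core w) ∧ Ok (fn Z (core w)) (la w) ∧ Ok (fn Z (core w)) (bb w) ∧
    fn Z w = ad (ad (fn Z (core w)) (bb w)) (la w) ∧ w = build (core w) (la w) (bb w) ∧
    ou w = core w ++ [la w] ∧ bb w.dropLast = bb w := by
  obtain ⟨v, e, rfl⟩ := snoc_cases (w := w) (by rintro rfl; simp at hl)
  have hv : v ≠ [] := by rintro rfl; simp at hl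
  rw [Lat_snoc] at hw
  obtain ⟨h1, h2, h3⟩ := Lat_ou hw.1 hv
  have he := hw.2
  rw [← h3] at he
  obtain ⟨k1, k2, k3, -, -⟩ := step_spec (Par_fn Par_Z h1) h2 he
  rw [h3] at k1 k2 k3
  have hc : ¬ (e = bb v + 1 ∧ fn Z v (bb v) = fn Z v (bb v + 1) + 1) := by
    intro hc
    apply hne
    rw [la_snoc, bb_snoc hv, sh, if_pos hc, hc.1]
  have hb : bb (v ++ [e]) = bb v := by rw [bb_snoc hv, sh, if_neg hc]
  have ho : so (fn Z v) (bb v) e = e := by rw [so, if_neg hc]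
  rw [ho] at k1
  rw [hb, la_snoc]
  simp only [core, List.dropLast_concat, build]
  refine ⟨h1, k1, h2, ?_, ?_, ?_, trivial⟩
  · rw [fn_snoc, ← h3]
  · rw [← evac_ne hv, evac_evac hw.1]
  · rw [ou_snoc hv, ho]

theorem recomp {u : List ℕ} {e f : ℕ} (hu : Lat u) (hne : e ≠ f)
    (he : Ok (fn Z u) e) (hf : Ok (fn Z u) f) :
    Lat (build u e f) ∧ la (build u e f) = e ∧ bb (build u e f) = f ∧
    core (build u e f) = u ∧ fn Z (build u e f) = ad (ad (fn Z u) f) e := by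
  have h1 := evac_spec hu
  have h2 : Lat (evac u ++ [f]) := by
    rw [Lat_snoc, h1.2]; exact ⟨h1.1, hf⟩
  obtain ⟨h3, h4⟩ := evac_spec h2
  obtain ⟨h5, h6⟩ := evac_dual h2
  rw [evac_evac hu] at h6
  rw [fn_snoc, h1.2] at h4
  have hne' : evac (evac u ++ [f]) ≠ [] := evac_ne_nil (by simp)
  unfold build
  refine ⟨?_, la_snoc _ _, ?_, ?_, ?_⟩
  · rw [Lat_snoc, h4]; exact ⟨h3, Ok_ad he hne.symm⟩
  · rw [bb_snoc hne', h5, h4, sh, if_neg]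
    rintro ⟨h7, h8⟩
    have := he f h7
    simp only [ad] at h8
    grind
  · rw [core, List.dropLast_concat, h6]
  · rw [fn_snoc, h4]

theorem des_core {w : List ℕ} (hw : Lat w) (hl : 3 ≤ w.length) (hne : la w ≠ bb w) :
    des w = decide (bb (core w) < bb w) :: des (core w) ++ [decide (la (core w) < la w)] := by
  obtain ⟨-, -, -, -, -, h6, h7⟩ := decomp hw (by omega) hne
  have hd := des_ou hw
  have hc : core w ≠ [] := by
    rw [← List.length_pos_iff, core, ou_length]; simp; omega
  rw [h6, des_snoc hc] at hd
  rw [← h7]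
  have hh : Lat w.dropLast := by
    obtain ⟨v, e, rfl⟩ := snoc_cases (w := w) (by rintro rfl; simp at hl)
    rw [List.dropLast_concat]; exact ((Lat_snoc _ _).1 hw).1
  rcases w with _ | ⟨x, _ | ⟨y, _ | ⟨z, v⟩⟩⟩
  · simp at hl
  · simp at hl
  · simp at hl
  · have := bb_ou (x := x) (y := y) (v := (z :: v).dropLast) hh
    simp only [des, List.tail_cons] at hd ⊢
    rw [List.cons_append, hd]
    congr 1
    simp only [core]
    simp only [List.dropLast_cons_cons] at this ⊢
    simp only [this]

/-- the swapping property -/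
def PK (K : List Bool) : Prop :=
  ∃ φ : List ℕ → List ℕ,
    (∀ w, Lat w → des w = K → la w < bb w → Lat (φ w) ∧ des (φ w) = K ∧ fn Z (φ w) = fn Z w ∧
      la (φ w) = bb w ∧ bb (φ w) = la w) ∧
    (∀ w w', Lat w → des w = K → la w < bb w → Lat w' → des w' = K → la w' < bb w' →
      φ w = φ w' → w = w')

theorem build_inj {w w' : List ℕ} (hw : Lat w) (hl : 2 ≤ w.length) (hne : la w ≠ bb w)
    (hw' : Lat w') (hl' : 2 ≤ w'.length) (hne' : la w' ≠ bb w')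
    (h1 : core w = core w') (h2 : la w = la w') (h3 : bb w = bb w') : w = w' := by
  rw [(decomp hw hl hne).2.2.2.2.1, (decomp hw' hl' hne').2.2.2.2.1, h1, h2, h3]

theorem PK_base (K : List Bool) : PK (false :: K ++ [true]) := by
  have hlen : ∀ w, des w = false :: K ++ [true] → 3 ≤ w.length := by
    intro w hw
    have := congrArg List.length hw
    rw [des_length] at this
    simp at this; omega
  have key : ∀ w, Lat w → des w = false :: K ++ [true] → la w < bb w →
      _ := fun w h1 h2 h3 =>
    recomp (e := bb w) (f := la w) (decomp h1 (by have := hlen w h2; omega) h3.ne).1 h3.ne'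
      (decomp h1 (by have := hlen w h2; omega) h3.ne).2.2.1
      (decomp h1 (by have := hlen w h2; omega) h3.ne).2.1
  refine ⟨fun w => build (core w) (bb w) (la w), ?_, ?_⟩
  · intro w h1 h2 h3
    have hl := hlen w h2
    obtain ⟨k1, k2, k3, k4, k5⟩ := key w h1 h2 h3
    have hf := (decomp h1 (by omega) h3.ne).2.2.2.1
    refine ⟨k1, ?_, ?_, k2, k3⟩
    · have hl' : 3 ≤ (build (core w) (bb w) (la w)).length := by
        simp [build, evac_length, core, ou_length]; omega
      rw [des_core k1 hl' (by rw [k2, k3]; exact h3.ne'), k2, k3, k4]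
      rw [des_core h1 hl h3.ne] at h2
      simp only [List.cons_append, List.cons.injEq, decide_eq_false_iff_not] at h2 ⊢
      obtain ⟨a1, a2⟩ := h2
      have a3 := List.append_inj' a2 rfl
      simp only [List.cons.injEq, decide_eq_true_eq, and_true] at a3
      refine ⟨by omega, ?_⟩
      rw [a3.1]
      simp; omega
    · rw [k5, hf, ad_comm]
  · intro w w' h1 h2 h3 h1' h2' h3' heq
    obtain ⟨k1, k2, k3, k4, k5⟩ := key w h1 h2 h3
    obtain ⟨m1, m2, m3, m4, m5⟩ := key w' h1' h2' h3'
    simp only at heq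
    rw [heq] at k2 k3 k4
    have := hlen w h2
    have := hlen w' h2'
    exact build_inj h1 (by omega) h3.ne h1' (by omega) h3'.ne (k4.symm.trans m4)
      (k3.symm.trans m3) (k2.symm.trans m2)

theorem PK_step {K : List Bool} (hK0 : K ≠ []) (hK : PK K) : PK (false :: K ++ [false]) := by
  classical
  obtain ⟨φ, hφ, hinj⟩ := hK
  have hlen : ∀ w, des w = false :: K ++ [false] → 3 ≤ w.length := by
    intro w hw
    have := congrArg List.length hw
    rw [des_length] at this
    simp at this; omega
  let g : List ℕ → List ℕ := fun w => if bb w ≤ la (core w) then core w else φ (core w)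
  have hsrc : ∀ w, Lat w → des w = false :: K ++ [false] → la w < bb w →
      bb w ≤ bb (core w) ∧ des (core w) = K ∧ la w ≤ la (core w) := by
    intro w h1 h2 h3
    rw [des_core h1 (hlen w h2) h3.ne] at h2
    simp only [List.cons_append, List.cons.injEq, decide_eq_false_iff_not] at h2
    obtain ⟨a1, a2⟩ := h2
    have a3 := List.append_inj' a2 rfl
    simp only [List.cons.injEq, decide_eq_false_iff_not, and_true] at a3
    exact ⟨by omega, a3.1, by omega⟩
  have hg : ∀ w, Lat w → des w = false :: K ++ [false] → la w < bb w →
      Lat (g w) ∧ des (g w) = K ∧ fn Z (g w) = fn Z (core w) ∧ bb w ≤ la (g w) ∧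
      la w ≤ bb (g w) ∧ (bb w ≤ la (core w) ↔ bb w ≤ bb (g w)) := by
    intro w h1 h2 h3
    obtain ⟨b1, b2, b3⟩ := hsrc w h1 h2 h3
    have hc := (decomp h1 (by have := hlen w h2; omega) h3.ne).1
    by_cases hcase : bb w ≤ la (core w)
    · have : g w = core w := if_pos hcase
      rw [this]
      exact ⟨hc, b2, rfl, hcase, by omega, by tauto⟩
    · have : g w = φ (core w) := if_neg hcase
      rw [this]
      obtain ⟨c1, c2, c3, c4, c5⟩ := hφ (core w) hc b2 (by omega)
      refine ⟨c1, c2, c3, by omega, by omega, ?_⟩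
      rw [c5]
  have key : ∀ w, Lat w → des w = false :: K ++ [false] → la w < bb w →
      _ := fun w h1 h2 h3 =>
    recomp (u := g w) (e := bb w) (f := la w) (hg w h1 h2 h3).1 h3.ne'
      (by rw [(hg w h1 h2 h3).2.2.1]
          exact (decomp h1 (by have := hlen w h2; omega) h3.ne).2.2.1)
      (by rw [(hg w h1 h2 h3).2.2.1]
          exact (decomp h1 (by have := hlen w h2; omega) h3.ne).2.1)
  refine ⟨fun w => build (g w) (bb w) (la w), ?_, ?_⟩
  · intro w h1 h2 h3
    have hl := hlen w h2
    obtain ⟨k1, k2, k3, k4, k5⟩ := key w h1 h2 h3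
    have hf := (decomp h1 (by omega) h3.ne).2.2.2.1
    obtain ⟨g1, g2, g3, g4, g5, g6⟩ := hg w h1 h2 h3
    refine ⟨k1, ?_, ?_, k2, k3⟩
    · have hl' : 3 ≤ (build (g w) (bb w) (la w)).length := by
        have := congrArg List.length g2
        rw [des_length] at this
        have := List.length_pos_iff.mpr hK0
        simp [build, evac_length]; omega
      rw [des_core k1 hl' (by rw [k2, k3]; exact h3.ne'), k2, k3, k4, g2]
      have e1 : ¬ bb (g w) < la w := by omega
      have e2 : ¬ la (g w) < bb w := by omega
      simp [e1, e2]
    · rw [k5, hf, g3, ad_comm]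
  · intro w w' h1 h2 h3 h1' h2' h3' heq
    obtain ⟨k1, k2, k3, k4, k5⟩ := key w h1 h2 h3
    obtain ⟨m1, m2, m3, m4, m5⟩ := key w' h1' h2' h3'
    simp only at heq
    rw [heq] at k2 k3 k4
    have l1 := hlen w h2
    have l2 := hlen w' h2'
    have e1 := k2.symm.trans m2
    have e2 := k3.symm.trans m3
    have e3 := k4.symm.trans m4
    have g6 := (hg w h1 h2 h3).2.2.2.2.2
    have g6' := (hg w' h1' h2' h3').2.2.2.2.2
    rw [e3, e1, ← g6'] at g6
    have e4 : core w = core w' := by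
      by_cases hcase : bb w' ≤ la (core w')
      · have i1 : g w = core w := if_pos (by rw [e1]; exact g6.2 hcase)
        have i2 : g w' = core w' := if_pos hcase
        rw [← i1, ← i2, e3]
      · have hcase' := fun h => hcase (g6.1 h)
        have i1 : g w = φ (core w) := if_neg (by rw [e1]; exact hcase')
        have i2 : g w' = φ (core w') := if_neg hcase
        rw [i1, i2] at e3
        obtain ⟨b1, b2, b3⟩ := hsrc w h1 h2 h3
        obtain ⟨b1', b2', b3'⟩ := hsrc w' h1' h2' h3'
        exact hinj _ _ (decomp h1 (by omega) h3.ne).1 b2 (by omega)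
          (decomp h1' (by omega) h3'.ne).1 b2' (by omega) e3
    exact build_inj h1 (by omega) h3.ne h1' (by omega) h3'.ne e4 e2 e1

theorem PK_all (K : List Bool) (n : ℕ) :
    PK (List.replicate n false ++ (false :: K ++ [true]) ++ List.replicate n false) := by
  induction n with
  | zero => simpa using PK_base K
  | succ n ih =>
    have := PK_step (by simp) ih
    convert this using 1
    rw [List.replicate_succ, List.cons_append, List.cons_append]
    rw [← List.replicate_succ, List.replicate_succ']
    simp

/-- threshold injection -/
theorem threshold {K : List Bool} (hK : PK K) :
    ∃ ψ : ℕ → (ℕ → Prop) → List ℕ → List ℕ, ∀ r D, (∀ a b, a ≤ b → D b → D a) →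
    (∀ q, q ≠ [] → Lat q → des q = K.reverse → r ≤ la q → D (bb q) →
      Lat (ψ r D q) ∧ des (ψ r D q) = K ∧ fn Z (ψ r D q) = fn Z q ∧ r ≤ la (ψ r D q) ∧
      D (bb (ψ r D q))) ∧
    (∀ q q', q ≠ [] → Lat q → des q = K.reverse → r ≤ la q → D (bb q) →
      q' ≠ [] → Lat q' → des q' = K.reverse → r ≤ la q' → D (bb q') →
      ψ r D q = ψ r D q' → q = q') := by
  classical
  obtain ⟨φ, hφ, hinj⟩ := hK
  refine ⟨fun r D q => if r ≤ bb q ∧ D (la q) then evac q else φ (evac q), ?_⟩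
  intro r D hD
  have base : ∀ q, q ≠ [] → Lat q → des q = K.reverse → Lat (evac q) ∧ des (evac q) = K ∧
      fn Z (evac q) = fn Z q ∧ la (evac q) = bb q ∧ bb (evac q) = la q := by
    intro q h0 h1 h2
    refine ⟨(evac_spec h1).1, ?_, (evac_spec h1).2, la_evac h0, bb_evac h1 h0⟩
    rw [des_evac h1, h2, List.reverse_reverse]
  have hlt : ∀ q, r ≤ la q → D (bb q) → ¬ (r ≤ bb q ∧ D (la q)) → bb q < la q := by
    intro q h1 h2 h3
    by_contra hcon
    exact h3 ⟨by omega, hD _ _ (by omega) h2⟩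
  constructor
  · intro q h0 h1 h2 h3 h4
    obtain ⟨c1, c2, c3, c4, c5⟩ := base q h0 h1 h2
    dsimp only
    split_ifs with hc
    · refine ⟨c1, c2, c3, ?_, ?_⟩
      · rw [c4]; exact hc.1
      · rw [c5]; exact hc.2
    · have := hlt q h3 h4 hc
      obtain ⟨d1, d2, d3, d4, d5⟩ := hφ _ c1 c2 (by rw [c4, c5]; exact this)
      refine ⟨d1, d2, d3.trans c3, ?_, ?_⟩
      · rw [d4, c5]; exact h3
      · rw [d5, c4]; exact h4
  · intro q q' h0 h1 h2 h3 h4 h0' h1' h2' h3' h4' heq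
    obtain ⟨c1, c2, c3, c4, c5⟩ := base q h0 h1 h2
    obtain ⟨c1', c2', c3', c4', c5'⟩ := base q' h0' h1' h2'
    have fin : evac q = evac q' → q = q' := by
      intro h
      rw [← evac_evac h1, h, evac_evac h1']
    dsimp only at heq
    split_ifs at heq with hc hc' hc'
    · exact fin heq
    · exfalso
      have := hlt q' h3' h4' hc'
      obtain ⟨d1, d2, d3, d4, d5⟩ := hφ _ c1' c2' (by rw [c4', c5']; exact this)
      rw [← heq] at d4 d5
      rw [c4, c5'] at d4
      rw [c5, c4'] at d5
      exact hc' ⟨by rw [← d5]; omega, by rw [← d4]; exact h4⟩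
    · exfalso
      have := hlt q h3 h4 hc
      obtain ⟨d1, d2, d3, d4, d5⟩ := hφ _ c1 c2 (by rw [c4, c5]; exact this)
      rw [heq] at d4 d5
      rw [c4', c5] at d4
      rw [c5', c4] at d5
      exact hc ⟨by rw [← d5]; omega, by rw [← d4]; exact h4'⟩
    · have l := hlt q h3 h4 hc
      have l' := hlt q' h3' h4' hc'
      exact fin (hinj _ _ c1 c2 (by rw [c4, c5]; exact l) c1' c2' (by rw [c4', c5']; exact l') heq)

end RibW

namespace RibW

def jn (v : List ℕ) : List ℕ → List Bool
  | [] => []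
  | x :: w => decide (la v < x) :: des (x :: w)

theorem des_jn {v : List ℕ} (hv : v ≠ []) (w : List ℕ) : des (v ++ w) = des v ++ jn v w := by
  cases w with
  | nil => simp [jn]
  | cons x w => exact des_append hv x w

/-- Injection of lattice words of descent pattern `p` into those of pattern `p'`. -/
def Le (p p' : List Bool) : Prop :=
  ∃ Ψ : List ℕ → List ℕ,
    (∀ w, w ≠ [] → Lat w → des w = p →
      Ψ w ≠ [] ∧ Lat (Ψ w) ∧ des (Ψ w) = p' ∧ fn Z (Ψ w) = fn Z w) ∧
    (∀ w w', w ≠ [] → Lat w → des w = p → w' ≠ [] → Lat w' → des w' = p →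
      Ψ w = Ψ w' → w = w')

theorem Le_refl (p : List Bool) : Le p p :=
  ⟨id, fun _ h1 h2 h3 => ⟨h1, h2, h3, rfl⟩, fun _ _ _ _ _ _ _ _ h => h⟩

theorem Le_trans {p q r : List Bool} (h1 : Le p q) (h2 : Le q r) : Le p r := by
  obtain ⟨f, f1, f2⟩ := h1
  obtain ⟨g, g1, g2⟩ := h2
  refine ⟨g ∘ f, ?_, ?_⟩
  · intro w a b c
    obtain ⟨d1, d2, d3, d4⟩ := f1 w a b c
    obtain ⟨e1, e2, e3, e4⟩ := g1 _ d1 d2 d3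
    exact ⟨e1, e2, e3, e4.trans d4⟩
  · intro w w' a b c a' b' c' h
    obtain ⟨d1, d2, d3, d4⟩ := f1 w a b c
    obtain ⟨e1, e2, e3, e4⟩ := f1 w' a' b' c'
    exact f2 w w' a b c a' b' c' (g2 _ _ d1 d2 d3 e1 e2 e3 h)

theorem Le_reverse (p : List Bool) : Le p p.reverse := by
  refine ⟨evac, ?_, ?_⟩
  · intro w a b c
    exact ⟨evac_ne_nil a, (evac_spec b).1, by rw [des_evac b, c], (evac_spec b).2⟩
  · intro w w' a b c a' b' c' h
    rw [← evac_evac b, h, evac_evac b']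

theorem context {K : List Bool} (hK : PK K) (A B : List Bool)
    (hB : B = [] ∨ ∃ B', B = true :: B') :
    Le (A ++ false :: K ++ B) (A ++ false :: K.reverse ++ B) := by
  obtain ⟨ψ, hψ⟩ := threshold hK
  let m := A.length + K.length + 2
  let k := K.length + 1
  let c : List ℕ → List ℕ := fun z => z.take m
  let W : List ℕ → List ℕ := fun z => z.drop m
  let q : List ℕ → List ℕ := fun z => (evac (c z)).take k
  let V : List ℕ → List ℕ := fun z => (evac (c z)).drop k
  let D : List ℕ → (ℕ → ℕ) → List ℕ → ℕ → Prop := fun V ν W b => ∀ y ∈ W.head?, slH ν b V < y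
  let q1 : List ℕ → List ℕ := fun z => ψ ((V z).headD 0) (D (V z) (fn Z (q z)) (W z)) (q z)
  let Ψ : List ℕ → List ℕ := fun z => evac (q1 z ++ V z) ++ W z
  have hDmono : ∀ V ν W, ∀ a b, a ≤ b → D V ν W b → D V ν W a := by
    intro V ν W a b hab h y hy
    exact lt_of_le_of_lt (slH_mono _ _ hab) (h y hy)
  have src : ∀ z, z ≠ [] → Lat z → des z = A ++ false :: K ++ B →
      (c z).length = m ∧ Lat (c z) ∧ LW (fn Z (c z)) (W z) ∧ des (c z) = A ++ false :: K ∧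
      jn (c z) (W z) = B := by
    intro z h0 h1 h2
    have hl := congrArg List.length h2
    rw [des_length] at hl
    simp at hl
    have hcl : (c z).length = m := by simp [c, m]; omega
    have hz : c z ++ W z = z := List.take_append_drop m z
    have hc0 : c z ≠ [] := by rw [← List.length_pos_iff, hcl]; omega
    rw [← hz, Lat_append] at h1
    rw [← hz, des_jn hc0] at h2
    have := List.append_inj h2 (by rw [des_length, hcl]; simp [m]; omega)
    exact ⟨hcl, h1.1, h1.2, this⟩
  have src2 : ∀ z, z ≠ [] → Lat z → des z = A ++ false :: K ++ B →
      (q z).length = k ∧ q z ≠ [] ∧ Lat (q z) ∧ V z ≠ [] ∧ LW (fn Z (q z)) (V z) ∧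
      des (q z) = K.reverse ∧ jn (q z) (V z) = false :: A.reverse ∧
      (V z).headD 0 ≤ la (q z) ∧ D (V z) (fn Z (q z)) (W z) (bb (q z)) := by
    intro z h0 h1 h2
    obtain ⟨s1, s2, s3, s4, s5⟩ := src z h0 h1 h2
    obtain ⟨e1, e2⟩ := evac_spec s2
    have e3 := des_evac s2
    have hx : q z ++ V z = evac (c z) := List.take_append_drop k _
    have hel := evac_length (c z)
    have hql : (q z).length = k := by simp [q, k]; omega
    have hq0 : q z ≠ [] := by rw [← List.length_pos_iff, hql]; omega
    have hV0 : V z ≠ [] := by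
      rw [← List.length_pos_iff]; simp [V, k]; omega
    have hc0 : c z ≠ [] := by rw [← List.length_pos_iff, s1]; omega
    have hbb := bb_evac s2 hc0
    rw [← hx, bb_append hq0] at hbb
    rw [← hx, Lat_append] at e1
    rw [s4, ← hx, des_jn hq0] at e3
    have e3' : des (q z) ++ jn (q z) (V z) = K.reverse ++ (false :: A.reverse) := by
      rw [e3]; simp
    have e4 := List.append_inj e3' (by rw [des_length, hql]; simp [k])
    refine ⟨hql, hq0, e1.1, hV0, e1.2, e4.1, e4.2, ?_, ?_⟩
    · have := e4.2
      cases hv : V z with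
      | nil => exact absurd hv hV0
      | cons y v =>
        rw [hv] at this
        simp [jn] at this
        simpa using this.1
    · intro y hy
      rw [hbb]
      rcases hB with hB | ⟨B', hB⟩
      · cases hw : W z with
        | nil => simp [hw] at hy
        | cons y' w => rw [hw, hB] at s5; simp [jn] at s5
      · cases hw : W z with
        | nil => simp [hw] at hy
        | cons y' w =>
          rw [hw, hB] at s5; simp [jn] at s5
          simp [hw] at hy
          rw [← hy]; exact s5.1
  have tgt : ∀ z, z ≠ [] → Lat z → des z = A ++ false :: K ++ B →
      (q1 z).length = k ∧ q1 z ≠ [] ∧ Lat (q1 z ++ V z) ∧ (evac (q1 z ++ V z)).length = m ∧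
      Lat (Ψ z) ∧ des (Ψ z) = A ++ false :: K.reverse ++ B ∧ fn Z (Ψ z) = fn Z z ∧
      fn Z (q1 z) = fn Z (q z) := by
    intro z h0 h1 h2
    obtain ⟨s1, s2, s3, s4, s5⟩ := src z h0 h1 h2
    obtain ⟨t1, t2, t3, t4, t5, t6, t7, t8, t9⟩ := src2 z h0 h1 h2
    obtain ⟨u1, u2, u3, u4, u5⟩ := (hψ _ _ (hDmono (V z) (fn Z (q z)) (W z))).1 (q z) t2 t3 t6 t8 t9
    change Lat (q1 z) at u1
    change des (q1 z) = K at u2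
    change fn Z (q1 z) = _ at u3
    change _ ≤ la (q1 z) at u4
    change D _ _ _ (bb (q1 z)) at u5
    have hVl : (V z).length = A.length + 1 := by
      simp only [V, List.length_drop, evac_length, s1, k, m]; omega
    have hql : (q1 z).length = k := by
      have := congrArg List.length u2
      rw [des_length] at this
      by_cases hq : q1 z = []
      · have h3 : fn Z (q z) = Z := by rw [← u3, hq]; rfl
        obtain ⟨x, v, hxv⟩ := List.exists_cons_of_ne_nil t2
        exfalso
        have hpos : ∀ (w : List ℕ) (μ : ℕ → ℕ) (j : ℕ), μ j ≤ fn μ w j := by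
          intro w
          induction w with
          | nil => intro μ j; exact le_rfl
          | cons a w ih =>
            intro μ j
            rw [fn_cons]
            refine le_trans ?_ (ih (ad μ a) j)
            simp only [ad]; split_ifs <;> omega
        have h4 := hpos v (ad Z x) x
        rw [← fn_cons, ← hxv, h3] at h4
        simp [ad, Z] at h4
      · have := List.length_pos_iff.mpr hq
        simp only [k]; omega
    have hq0 : q1 z ≠ [] := by rw [← List.length_pos_iff, hql]; omega
    have hL : Lat (q1 z ++ V z) := by rw [Lat_append, u3]; exact ⟨u1, t5⟩
    obtain ⟨e1, e2⟩ := evac_spec hL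
    have e3 := des_evac hL
    have hfn : fn Z (q1 z ++ V z) = fn Z (c z) := by
      rw [fn_append, u3, ← fn_append]
      have hx : q z ++ V z = evac (c z) := List.take_append_drop k _
      rw [hx, (evac_spec s2).2]
    have hz : c z ++ W z = z := List.take_append_drop m z
    have hne : q1 z ++ V z ≠ [] := by simp [hq0]
    refine ⟨hql, hq0, hL, ?_, ?_, ?_, ?_, u3⟩
    · rw [evac_length, List.length_append, hql, hVl]; simp only [k, m]; omega
    · simp only [Ψ]
      rw [Lat_append, e2, hfn]; exact ⟨e1, s3⟩
    · simp only [Ψ]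
      rw [des_jn (evac_ne_nil hne), e3, des_jn hq0, u2]
      have hj : jn (q1 z) (V z) = false :: A.reverse := by
        rw [← t7]
        cases hv : V z with
        | nil => rfl
        | cons y v =>
          rw [hv] at t8 u4
          simp only [List.headD_cons] at t8 u4
          have a1 : ¬ la (q1 z) < y := by omega
          have a2 : ¬ la (q z) < y := by omega
          simp only [jn, a1, a2]
      rw [hj]
      have hj2 : jn (evac (q1 z ++ V z)) (W z) = B := by
        have hla : la (evac (q1 z ++ V z)) = slH (fn Z (q z)) (bb (q1 z)) (V z) := by
          rw [la_evac hne, bb_append hq0, u3]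
        rw [← s5]
        cases hw : W z with
        | nil => rfl
        | cons y w =>
          have a1 := u5 y (by simp [hw])
          rw [← hla] at a1
          have a2 : la (c z) < y := by
            rcases hB with hB | ⟨B', hB⟩
            · rw [hw, hB] at s5; simp [jn] at s5
            · rw [hw, hB] at s5; simp [jn] at s5
              exact s5.1
          simp only [jn, a1, a2]
      rw [hj2]
      simp
    · simp only [Ψ]
      rw [fn_append, e2, hfn, ← fn_append, hz]
  refine ⟨Ψ, ?_, ?_⟩
  · intro z h0 h1 h2
    obtain ⟨t1, t2, t3, t4, t5, t6, t7, t8⟩ := tgt z h0 h1 h2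
    refine ⟨?_, t5, t6, t7⟩
    simp only [Ψ]
    have := evac_ne_nil (w := q1 z ++ V z) (by simp [t2])
    simp [this]
  · intro z z' h0 h1 h2 h0' h1' h2' heq
    obtain ⟨t1, t2, t3, t4, t5, t6, t7, t8⟩ := tgt z h0 h1 h2
    obtain ⟨t1', t2', t3', t4', t5', t6', t7', t8'⟩ := tgt z' h0' h1' h2'
    obtain ⟨u1, hW⟩ := List.append_inj heq (t4.trans t4'.symm)
    have u2 : q1 z ++ V z = q1 z' ++ V z' := by
      rw [← evac_evac t3, u1, evac_evac t3']
    obtain ⟨u3, hV⟩ := List.append_inj u2 (t1.trans t1'.symm)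
    have hν : fn Z (q z) = fn Z (q z') := by rw [← t8, ← t8', u3]
    have hq : q z = q z' := by
      obtain ⟨-, v2, v3, v4, v5, v6, v7, v8, v9⟩ := src2 z h0 h1 h2
      obtain ⟨-, v2', v3', v4', v5', v6', v7', v8', v9'⟩ := src2 z' h0' h1' h2'
      simp only [q1] at u3
      rw [hW, hV, hν] at u3 v9
      rw [hV] at v8
      exact (hψ _ _ (hDmono (V z') (fn Z (q z')) (W z'))).2 (q z) (q z') v2 v3 v6 v8 v9
        v2' v3' v6' v8' v9' u3
    have hx : q z ++ V z = evac (c z) := List.take_append_drop k _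
    have hx' : q z' ++ V z' = evac (c z') := List.take_append_drop k _
    have hc : c z = c z' := by
      rw [← evac_evac (src z h0 h1 h2).2.1, ← evac_evac (src z' h0' h1' h2').2.1, ← hx, ← hx',
        hq, hV]
    have hz : c z ++ W z = z := List.take_append_drop m z
    have hz' : c z' ++ W z' = z' := List.take_append_drop m z'
    rw [← hz, ← hz', hc, hW]

/-- pattern of a list of rows, each preceded by a down step -/
def pp : List ℕ → List Bool
  | [] => []
  | a :: l => true :: (List.replicate (a - 1) false ++ pp l)

def pat (l : List ℕ) : List Bool := (pp l).tail

theorem pp_append (l l' : List ℕ) : pp (l ++ l') = pp l ++ pp l' := by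
  induction l with
  | nil => rfl
  | cons a l ih => simp [pp, ih]

theorem pp_reverse (l : List ℕ) : true :: (pp l).reverse = pp l.reverse ++ [true] := by
  induction l with
  | nil => rfl
  | cons a l ih =>
    simp only [pp, List.reverse_cons, List.reverse_append, pp_append, List.append_assoc]
    rw [← List.cons_append, ih]
    simp

theorem pat_reverse (l : List ℕ) : pat l.reverse = (pat l).reverse := by
  rcases List.eq_nil_or_concat l with h | ⟨l', a, rfl⟩
  · subst h; rfl
  · have h := pp_reverse (l' ++ [a])
    cases hl : l' ++ [a] with
    | nil => simp at hl
    | cons b l2 =>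
      rw [List.concat_eq_append, hl] 
      rw [hl] at h
      unfold pat
      have h3 : pp (b :: l2) = true :: pat (b :: l2) := by simp [pp, pat]
      rw [h3] at h ⊢
      cases hr : pp (b :: l2).reverse with
      | nil => rw [hr] at h; simp at h
      | cons t r =>
        rw [hr] at h
        simp at h ⊢
        exact h.2.symm

theorem move (γ ξ δ : List ℕ) (n m : ℕ) :
    Le (pat (γ ++ (n + m + 3) :: (ξ ++ (n + 1) :: δ)))
      (pat (γ ++ (n + 2) :: (ξ.reverse ++ (n + m + 2) :: δ))) := by
  have h1 := PK_all (List.replicate m false ++ pp ξ) n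
  have h2 : ∀ A, Le _ _ := fun A => context h1 A (pp δ) (by
    cases δ with
    | nil => exact Or.inl rfl
    | cons a l => exact Or.inr ⟨_, rfl⟩)
  have e1 : List.replicate (n + m + 2) false =
      false :: List.replicate n false ++ false :: List.replicate m false := by
    rw [← List.replicate_succ, ← List.replicate_succ, ← List.replicate_add]
    congr 1; omega
  have e2 : List.replicate (n + m + 1) false =
      List.replicate m false ++ false :: List.replicate n false := by
    rw [← List.replicate_succ, ← List.replicate_add]
    congr 1; omega
  have e3 : List.replicate (n + 1) false = false :: List.replicate n false := rfl
  have e4 := pp_reverse ξ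
  have key : ∀ A, Le (A ++ (List.replicate (n + m + 2) false ++ (pp ξ ++ pp ((n + 1) :: δ))))
      (A ++ (List.replicate (n + 1) false ++ (pp ξ.reverse ++ pp ((n + m + 2) :: δ)))) := by
    intro A
    have := h2 A
    have a1 : pp ξ.reverse ++ pp ((n + m + 2) :: δ) =
        true :: ((pp ξ).reverse ++ (List.replicate (n + m + 1) false ++ pp δ)) := by
      rw [← List.cons_append, e4]; simp [pp]
    rw [a1, e1, e2, e3]
    convert this using 1
    · simp [pp]
    · simp
  cases γ with
  | nil =>
    have := key []
    simpa [pat, pp, pp_append] using this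
  | cons a l =>
    have := key (List.replicate (a - 1) false ++ pp l ++ [true])
    simpa [pat, pp, pp_append] using this

end RibW

namespace RibW

def sq (l : List ℕ) : ℕ := (l.map (fun a => a ^ 2)).sum

def Equi (l : List ℕ) : Prop := ∀ a ∈ l, ∀ b ∈ l, a ≤ b + 1

theorem step_down (γ ξ δ : List ℕ) (a b : ℕ) (hb : 1 ≤ b) (hab : b + 2 ≤ a)
    (hpos : ∀ x ∈ γ ++ a :: (ξ ++ b :: δ), 1 ≤ x) :
    ∃ l', (∀ x ∈ l', 1 ≤ x) ∧ l'.length = (γ ++ a :: (ξ ++ b :: δ)).length ∧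
      l'.sum = (γ ++ a :: (ξ ++ b :: δ)).sum ∧ sq l' < sq (γ ++ a :: (ξ ++ b :: δ)) ∧
      Le (pat (γ ++ a :: (ξ ++ b :: δ))) (pat l') := by
  obtain ⟨n, rfl⟩ : ∃ n, b = n + 1 := ⟨b - 1, by omega⟩
  obtain ⟨m, rfl⟩ : ∃ m, a = n + m + 3 := ⟨a - n - 3, by omega⟩
  refine ⟨_, ?_, ?_, ?_, ?_, move γ ξ δ n m⟩
  · intro x hx
    have := hpos x
    simp at hx this
    grind
  · simp
  · simp; ring
  · simp [sq]; nlinarith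

theorem reach (l : List ℕ) (hpos : ∀ a ∈ l, 1 ≤ a) :
    ∃ l', (∀ a ∈ l', 1 ≤ a) ∧ l'.length = l.length ∧ l'.sum = l.sum ∧ Equi l' ∧
      Le (pat l) (pat l') := by
  induction hn : sq l using Nat.strong_induction_on generalizing l with
  | _ n ih =>
    by_cases he : Equi l
    · exact ⟨l, hpos, rfl, rfl, he, Le_refl _⟩
    · have : ∃ l1, (∀ x ∈ l1, 1 ≤ x) ∧ l1.length = l.length ∧ l1.sum = l.sum ∧ sq l1 < sq l ∧
          Le (pat l) (pat l1) := by
        unfold Equi at he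
        push Not at he
        obtain ⟨a, ha, b, hb, hab⟩ := he
        have hb1 := hpos b hb
        obtain ⟨s, t, rfl⟩ := List.append_of_mem ha
        have hb' : b ∈ s ∨ b ∈ t := by
          simp at hb
          rcases hb with h | h | h
          · exact Or.inl h
          · omega
          · exact Or.inr h
        rcases hb' with h | h
        · obtain ⟨γ, ξ, rfl⟩ := List.append_of_mem h
          have e : (γ ++ b :: ξ ++ a :: t).reverse =
              t.reverse ++ a :: (ξ.reverse ++ b :: γ.reverse) := by simp
          obtain ⟨l1, h1, h2, h3, h4, h5⟩ := step_down t.reverse ξ.reverse γ.reverse a b hb1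
            (by omega) (by rw [← e]; intro x hx; exact hpos x (List.mem_reverse.1 hx))
          rw [← e] at h2 h3 h4 h5
          refine ⟨l1, h1, ?_, ?_, ?_, ?_⟩
          · rw [h2, List.length_reverse]
          · rw [h3, List.sum_reverse]
          · refine lt_of_lt_of_eq h4 ?_
            unfold sq
            rw [List.map_reverse, List.sum_reverse]
          · refine Le_trans ?_ h5
            rw [pat_reverse]
            exact Le_reverse _
        · obtain ⟨ξ, δ, rfl⟩ := List.append_of_mem h
          exact step_down s ξ δ a b hb1 (by omega) hpos
      obtain ⟨l1, h1, h2, h3, h4, h5⟩ := this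
      obtain ⟨l', k1, k2, k3, k4, k5⟩ := ih (sq l1) (hn ▸ h4) l1 h1 rfl
      exact ⟨l', k1, k2.trans h2, k3.trans h3, k4, Le_trans h5 k5⟩

def RW : List ℕ → List ℕ → Prop
  | [], w => w = []
  | a :: l, w => ∃ u v, w = u ++ v ∧ u.length = a ∧ des u = List.replicate (a - 1) false ∧ RW l v

theorem RW_of_des {l w : List ℕ} (hw : w ≠ []) (hpos : ∀ a ∈ l, 1 ≤ a)
    (h : true :: des w = pp l) : RW l w := by
  induction l generalizing w with
  | nil => simp [pp] at h
  | cons a l ih =>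
    simp only [pp, List.cons.injEq, true_and] at h
    have ha := hpos a (by simp)
    have hl := congrArg List.length h
    rw [des_length] at hl
    simp at hl
    have hw' := List.length_pos_iff.mpr hw
    have hul : (w.take a).length = a := by simp; omega
    have hu : w.take a ≠ [] := by rw [← List.length_pos_iff]; omega
    rw [← List.take_append_drop a w, des_jn hu] at h
    obtain ⟨h1, h2⟩ := List.append_inj h (by rw [des_length, hul]; simp)
    refine ⟨w.take a, w.drop a, (List.take_append_drop a w).symm, hul, h1, ?_⟩
    cases hv : w.drop a with
    | nil =>
      rw [hv] at h2
      cases l with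
      | nil => rfl
      | cons b l => simp [jn, pp] at h2
    | cons y v =>
      rw [hv] at h2
      apply ih (by simp) (fun x hx => hpos x (by simp [hx]))
      cases l with
      | nil => simp [jn, pp] at h2
      | cons b l =>
        simp only [jn, pp, List.cons.injEq] at h2 ⊢
        exact ⟨trivial, h2.2⟩

theorem fn_mono (w : List ℕ) (μ : ℕ → ℕ) (j : ℕ) : μ j ≤ fn μ w j := by
  induction w generalizing μ with
  | nil => exact le_rfl
  | cons a w ih =>
    rw [fn_cons]
    refine le_trans ?_ (ih (ad μ a))
    simp only [ad]; split_ifs <;> omega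

theorem fn_count (w : List ℕ) (μ : ℕ → ℕ) (j : ℕ) : fn μ w j = μ j + w.count j := by
  induction w generalizing μ with
  | nil => rfl
  | cons a w ih =>
    rw [fn_cons, ih, List.count_cons]
    simp only [ad]; grind

theorem Par_le {μ : ℕ → ℕ} (h : Par μ) {i j : ℕ} (hij : i ≤ j) : μ j ≤ μ i :=
  antitone_nat_of_succ_le h hij

theorem strip_len {u : List ℕ} {μ : ℕ → ℕ} (x n : ℕ) (hμ : Par μ) (hu : LW μ (x :: u))
    (hd : des (x :: u) = List.replicate n false) :
    μ x + (u.length + 1) ≤ fn μ (x :: u) 0 := by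
  induction u generalizing μ x n with
  | nil =>
    have := Par_le (Par_ad hμ hu.1) (Nat.zero_le x)
    simp only [fn_cons, fn_nil]
    simp [ad] at this ⊢
    exact this
  | cons y u ih =>
    have hp := Par_ad hμ hu.1
    cases n with
    | zero => simp [des] at hd
    | succ n =>
      simp only [des, List.replicate_succ, List.cons.injEq, decide_eq_false_iff_not] at hd
      have h1 := ih y n hp hu.2 hd.2
      have h2 := Par_le hp (not_lt.1 hd.1)
      rw [fn_cons, List.length_cons]
      have h3 : ad μ x x = μ x + 1 := by simp [ad]
      omega

theorem strip_sorted {u : List ℕ} (n : ℕ) (hd : des u = List.replicate n false) :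
    u.Pairwise (· ≥ ·) := by
  rw [← List.isChain_iff_pairwise]
  induction u generalizing n with
  | nil => simp
  | cons x u ih =>
    cases u with
    | nil => simp
    | cons y u =>
      cases n with
      | zero => simp [des] at hd
      | succ n =>
        simp only [des, List.replicate_succ, List.cons.injEq, decide_eq_false_iff_not] at hd
        rw [List.isChain_cons_cons]
        exact ⟨not_lt.1 hd.1, ih n hd.2⟩

theorem strip_inter {u : List ℕ} {μ : ℕ → ℕ} (i : ℕ) (hμ : Par μ) (hu : LW μ u)
    (hd : u.Pairwise (· ≥ ·)) : fn μ u (i + 1) ≤ μ i := by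
  induction u generalizing μ with
  | nil => exact hμ i
  | cons x u ih =>
    rw [List.pairwise_cons] at hd
    by_cases hx : x ≤ i
    · rw [fn_count, List.count_eq_zero_of_not_mem]
      · exact hμ i
      · intro h
        rcases List.mem_cons.1 h with h | h
        · omega
        · have := hd.1 _ h; omega
    · have := ih (Par_ad hμ hu.1) hu.2 hd.2
      rw [fn_cons]
      refine this.trans ?_
      rw [ad, if_neg (by omega)]

theorem RW_zero {l w : List ℕ} {μ : ℕ → ℕ} (hpos : ∀ a ∈ l, 1 ≤ a) (hμ : Par μ) (hw : LW μ w)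
    (h : RW l w) : ∀ a ∈ l, a ≤ fn μ w 0 := by
  induction l generalizing w μ with
  | nil => simp
  | cons b l ih =>
    obtain ⟨u, v, rfl, h1, h2, h3⟩ := h
    rw [LW_append] at hw
    rw [fn_append]
    intro a ha
    rcases List.mem_cons.1 ha with ha | ha
    · refine le_trans ?_ (fn_mono v _ 0)
      cases u with
      | nil => have := hpos b (by simp); simp at h1; omega
      | cons x u =>
        have := strip_len x _ hμ hw.1 h2
        simp at h1
        omega
    · exact ih (fun x hx => hpos x (by simp [hx])) (Par_fn hμ hw.1) hw.2 h3 a ha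

theorem RW_shift {l w : List ℕ} {μ : ℕ → ℕ} (i : ℕ) (hμ : Par μ) (hw : LW μ w)
    (h : RW l w) : fn μ w (i + l.length) ≤ μ i := by
  induction l generalizing w μ i with
  | nil => have : w = [] := h; subst this; exact le_rfl
  | cons b l ih =>
    obtain ⟨u, v, rfl, h1, h2, h3⟩ := h
    rw [LW_append] at hw
    rw [fn_append]
    have e := ih (i + 1) (Par_fn hμ hw.1) hw.2 h3
    have e2 := strip_inter i hμ hw.1 (strip_sorted _ h2)
    rw [List.length_cons, show i + (l.length + 1) = i + 1 + l.length by omega]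
    exact e.trans e2

theorem RW_last {l w : List ℕ} {μ : ℕ → ℕ} (j : ℕ) (hj : μ j = 0) (hμ : Par μ) (hw : LW μ w)
    (h : RW l w) : ∀ a ∈ l, fn μ w (j + l.length - 1) ≤ a := by
  induction l generalizing w μ j with
  | nil => simp
  | cons b l ih =>
    obtain ⟨u, v, rfl, h1, h2, h3⟩ := h
    rw [LW_append] at hw
    rw [fn_append]
    intro a ha
    rcases List.mem_cons.1 ha with ha | ha
    · have e := RW_shift j (Par_fn hμ hw.1) hw.2 h3
      have e2 : fn μ u j ≤ a := by
        rw [fn_count, hj]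
        have := List.count_le_length (a := j) (l := u)
        omega
      exact e.trans e2
    · have e2 := strip_inter j hμ hw.1 (strip_sorted _ h2)
      have := ih (j + 1) (by omega) (Par_fn hμ hw.1) hw.2 h3 a ha
      rw [List.length_cons, show j + (l.length + 1) - 1 = j + 1 + l.length - 1 by omega]
      exact this

def bw (k : ℕ) : ℕ → ℕ → List ℕ → List ℕ
  | _, _, [] => []
  | j, t, a :: l => List.replicate k j ++
      (if a = k then bw k (j + 1) t l else t :: bw k (j + 1) (t + 1) l)

def MM (k j t : ℕ) : ℕ → ℕ := fun i => if i < t then k + 1 else if i < j then k else 0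

theorem LW_replicate (c j : ℕ) (μ : ℕ → ℕ) (h : ∀ i, j = i + 1 → μ j + c ≤ μ i) :
    LW μ (List.replicate c j) := by
  induction c generalizing μ with
  | zero => trivial
  | succ c ih =>
    refine ⟨fun i hi => by have := h i hi; omega, ih _ fun i hi => ?_⟩
    have := h i hi
    simp only [ad]; grind

theorem bw_LW {k : ℕ} (l : List ℕ) (j t : ℕ) (ht : t ≤ j) :
    LW (MM k j t) (bw k j t l) ∧
    ∃ t', t' ≤ j + l.length ∧ fn (MM k j t) (bw k j t l) = MM k (j + l.length) t' := by
  induction l generalizing j t with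
  | nil => exact ⟨trivial, t, ht, rfl⟩
  | cons a l ih =>
    have h1 : LW (MM k j t) (List.replicate k j) := by
      apply LW_replicate
      intro i hi
      simp only [MM]; grind
    have h2 : fn (MM k j t) (List.replicate k j) = MM k (j + 1) t := by
      funext i
      rw [fn_count, List.count_replicate]
      simp only [MM]; grind
    have e : j + (l.length + 1) = j + 1 + l.length := by omega
    simp only [bw, LW_append, h2, fn_append, h1, true_and, List.length_cons, e]
    split_ifs
    · exact ih (j + 1) t (by omega)
    · have h3 : ad (MM k (j + 1) t) t = MM k (j + 1) (t + 1) := by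
        funext i
        simp only [MM, ad]; grind
      simp only [LW, fn_cons, h3]
      obtain ⟨i1, i2⟩ := ih (j + 1) (t + 1) (by omega)
      refine ⟨⟨?_, i1⟩, i2⟩
      intro i hi
      simp only [MM]; grind

theorem des_replicate (c j : ℕ) : des (List.replicate c j) = List.replicate (c - 1) false := by
  induction c with
  | zero => rfl
  | succ c ih =>
    cases c with
    | zero => rfl
    | succ c =>
      simp only [List.replicate_succ, des] at ih ⊢
      rw [ih]
      simp [List.replicate_succ]

theorem la_replicate (c j : ℕ) (hc : 1 ≤ c) : la (List.replicate c j) = j := by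
  obtain ⟨d, rfl⟩ : ∃ d, c = d + 1 := ⟨c - 1, by omega⟩
  rw [List.replicate_succ', la_snoc]

theorem bw_des {k : ℕ} (hk : 1 ≤ k) (l : List ℕ) (a j t : ℕ) (ht : t ≤ j)
    (h : ∀ x ∈ a :: l, x = k ∨ x = k + 1) :
    ∃ v, bw k j t (a :: l) = j :: v ∧ true :: des (bw k j t (a :: l)) = pp (a :: l) := by
  induction l generalizing a j t with
  | nil =>
    obtain ⟨d, rfl⟩ : ∃ d, k = d + 1 := ⟨k - 1, by omega⟩
    have hne : List.replicate (d + 1) j ≠ [] := by simp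
    rcases h a (by simp) with rfl | rfl
    · simp only [bw, if_true, List.append_nil, des_replicate, pp]
      exact ⟨_, rfl, by simp⟩
    · simp only [bw, pp]
      rw [if_neg (by omega), des_snoc hne, des_replicate, la_replicate _ _ hk]
      refine ⟨_, rfl, ?_⟩
      have : ¬ j < t := by omega
      simp [this, List.replicate_succ']
  | cons b l ih =>
    obtain ⟨d, rfl⟩ : ∃ d, k = d + 1 := ⟨k - 1, by omega⟩
    have hne : List.replicate (d + 1) j ≠ [] := by simp
    have h' : ∀ x ∈ b :: l, x = d + 1 ∨ x = d + 1 + 1 := fun x hx => h x (by simp [hx])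
    rw [bw, pp]
    split_ifs with hc
    · obtain ⟨v, i1, i2⟩ := ih b (j + 1) t (by omega) h'
      refine ⟨_, rfl, ?_⟩
      rw [← i2, i1, des_append hne, la_replicate _ _ hk, des_replicate, hc]
      simp
    · have hc' : a = d + 1 + 1 := by
        rcases h a (by simp) with h | h
        · exact absurd h hc
        · exact h
      obtain ⟨v, i1, i2⟩ := ih b (j + 1) (t + 1) (by omega) h'
      refine ⟨_, rfl, ?_⟩
      have : ¬ j < t := by omega
      have h3 : t < j + 1 := by omega
      rw [← i2, i1, des_append hne, la_replicate _ _ hk, des_replicate, hc']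
      simp [this, des, h3, List.replicate_succ']

theorem equi_word {l : List ℕ} (hl : l ≠ []) (hpos : ∀ a ∈ l, 1 ≤ a) (he : Equi l) :
    ∃ w, w ≠ [] ∧ Lat w ∧ true :: des w = pp l ∧
      fn Z w 0 ≤ fn Z w (l.length - 1) + 1 := by
  obtain ⟨k, hk1, hk2⟩ : ∃ k ∈ l, ∀ x ∈ l, k ≤ x := by
    obtain ⟨k, h1, h2⟩ := List.toFinset l |>.exists_min_image id (by
      obtain ⟨a, l', rfl⟩ := List.exists_cons_of_ne_nil hl
      exact ⟨a, by simp⟩)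
    exact ⟨k, by simpa using h1, by simpa using h2⟩
  obtain ⟨a, l', rfl⟩ := List.exists_cons_of_ne_nil hl
  have hh : ∀ x ∈ a :: l', x = k ∨ x = k + 1 := by
    intro x hx
    have := hk2 x hx
    have := he x hx k hk1
    omega
  obtain ⟨v, h1, h2⟩ := bw_des (hpos k hk1) l' a 0 0 le_rfl hh
  obtain ⟨h3, t, h4, h5⟩ := bw_LW (k := k) (a :: l') 0 0 le_rfl
  have hz : MM k 0 0 = Z := by funext i; simp [MM, Z]
  rw [hz] at h3 h5
  refine ⟨_, by rw [h1]; simp, h3, h2, ?_⟩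
  rw [h5]
  simp only [MM, List.length_cons]
  grind

theorem pat_iff {l : List ℕ} (hl : l ≠ []) (p : List Bool) : p = pat l ↔ true :: p = pp l := by
  obtain ⟨a, l', rfl⟩ := List.exists_cons_of_ne_nil hl
  simp [pat, pp]

/-- the separating word -/
theorem not_equi {l w : List ℕ} (hpos : ∀ a ∈ l, 1 ≤ a) (hne : ¬ Equi l) (hw : w ≠ [])
    (hL : Lat w) (hd : true :: des w = pp l) :
    fn Z w (l.length - 1) + 1 < fn Z w 0 := by
  unfold Equi at hne
  push Not at hne
  obtain ⟨a, ha, b, hb, hab⟩ := hne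
  have h := RW_of_des hw hpos hd
  have h1 := RW_zero hpos Par_Z hL h a ha
  have h2 := RW_last 0 rfl Par_Z hL h b hb
  rw [Nat.zero_add] at h2
  omega

end RibW

namespace RibW

def IsPath : List (ℕ × ℕ) → List Bool → Prop
  | [_], [] => True
  | c :: d :: L, false :: p => (c.1 = d.1 ∧ c.2 = d.2 + 1) ∧ IsPath (d :: L) p
  | c :: d :: L, true :: p => (d.1 = c.1 + 1 ∧ d.2 = c.2) ∧ IsPath (d :: L) p
  | _, _ => False

theorem IsPath_nil (c : ℕ × ℕ) (p : List Bool) : IsPath [c] p ↔ p = [] := by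
  cases p <;> simp [IsPath]

theorem IsPath_ne {L : List (ℕ × ℕ)} {p : List Bool} (h : IsPath L p) : ∃ c L', L = c :: L' := by
  cases L with
  | nil => cases p <;> simp [IsPath] at h
  | cons c L' => exact ⟨c, L', rfl⟩

/-- case analysis on a step -/
theorem IsPath_cons {c d : ℕ × ℕ} {L : List (ℕ × ℕ)} {p : List Bool} (h : IsPath (c :: d :: L) p) :
    ∃ b p', p = b :: p' ∧ IsPath (d :: L) p' ∧
      ((b = false ∧ c.1 = d.1 ∧ c.2 = d.2 + 1) ∨ (b = true ∧ d.1 = c.1 + 1 ∧ d.2 = c.2)) := by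
  cases p with
  | nil => simp [IsPath] at h
  | cons b p =>
    cases b with
    | false => exact ⟨_, _, rfl, h.2, Or.inl ⟨rfl, h.1⟩⟩
    | true => exact ⟨_, _, rfl, h.2, Or.inr ⟨rfl, h.1⟩⟩

theorem path_length {L : List (ℕ × ℕ)} {p : List Bool} (h : IsPath L p) :
    L.length = p.length + 1 := by
  induction L generalizing p with
  | nil => cases p <;> simp [IsPath] at h
  | cons c L ih =>
    cases L with
    | nil => rw [IsPath_nil] at h; subst h; rfl
    | cons d L =>
      obtain ⟨b, p', rfl, h1, -⟩ := IsPath_cons h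
      have := ih h1
      simp at this ⊢; omega

def Sw (c d : ℕ × ℕ) : Prop := c.1 ≤ d.1 ∧ d.2 ≤ c.2 ∧ c.1 + d.2 < d.1 + c.2

theorem path_pairwise {L : List (ℕ × ℕ)} {p : List Bool} (h : IsPath L p) : L.Pairwise Sw := by
  induction L generalizing p with
  | nil => simp
  | cons c L ih =>
    cases L with
    | nil => simp
    | cons d L =>
      obtain ⟨b, p', rfl, h1, h2⟩ := IsPath_cons h
      have i1 := ih h1
      rw [List.pairwise_cons]
      refine ⟨?_, i1⟩
      intro x hx
      have hcd : Sw c d := by unfold Sw; omega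
      rcases List.mem_cons.1 hx with rfl | hx
      · exact hcd
      · have := (List.pairwise_cons.1 i1).1 x hx
        unfold Sw at *; omega

theorem path_nodup {L : List (ℕ × ℕ)} {p : List Bool} (h : IsPath L p) : L.Nodup := by
  refine (path_pairwise h).imp ?_
  rintro a b hab rfl
  unfold Sw at hab; omega

theorem path_comp {L : List (ℕ × ℕ)} {p : List Bool} (h : IsPath L p) {x y : ℕ × ℕ}
    (hx : x ∈ L) (hy : y ∈ L) : x = y ∨ Sw x y ∨ Sw y x := by
  have hp := path_pairwise h
  clear h
  induction L with
  | nil => simp at hx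
  | cons c L ih =>
    rw [List.pairwise_cons] at hp
    rcases List.mem_cons.1 hx with h1 | h1 <;> rcases List.mem_cons.1 hy with h2 | h2
    · exact Or.inl (h1.trans h2.symm)
    · subst h1; exact Or.inr (Or.inl (hp.1 _ h2))
    · subst h2; exact Or.inr (Or.inr (hp.1 _ h1))
    · exact ih h1 h2 hp.2

theorem path_conv_head {L : List (ℕ × ℕ)} {p : List Bool} {c : ℕ × ℕ} (h : IsPath (c :: L) p)
    {x : ℕ × ℕ} (hx : x ∈ c :: L) :
    (x.1 = c.1 → ∀ m, x.2 ≤ m → m ≤ c.2 → (c.1, m) ∈ c :: L) ∧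
    (x.2 = c.2 → ∀ m, c.1 ≤ m → m ≤ x.1 → (m, c.2) ∈ c :: L) := by
  induction L generalizing p c with
  | nil =>
    have : x = c := by simpa using hx
    subst this
    constructor
    · intro _ m h1 h2
      have : m = x.2 := by omega
      simp [this]
    · intro _ m h1 h2
      have : m = x.1 := by omega
      simp [this]
  | cons d L ih =>
    have hpw := path_pairwise h
    obtain ⟨b, p', rfl, h1, h2⟩ := IsPath_cons h
    rw [List.pairwise_cons] at hpw
    constructor
    · intro e m m1 m2
      by_cases hm : m = c.2
      · subst hm; simp
      · have hxc : x ≠ c := by rintro rfl; omega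
        have hx' : x ∈ d :: L := by
          rcases List.mem_cons.1 hx with r | r
          · exact absurd r hxc
          · exact r
        have hdx : x = d ∨ Sw d x := by
          rcases List.mem_cons.1 hx' with r | r
          · exact Or.inl r
          · exact Or.inr ((List.pairwise_cons.1 hpw.2).1 x r)
        have : d.1 ≤ x.1 := by
          rcases hdx with rfl | r
          · exact le_rfl
          · exact r.1
        have e2 : c.1 = d.1 := by omega
        have := (ih h1 hx').1 (by omega) m m1 (by omega)
        rw [e2]
        exact List.mem_cons_of_mem _ this
    · intro e m m1 m2
      by_cases hm : m = c.1
      · subst hm; simp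
      · have hxc : x ≠ c := by rintro rfl; omega
        have hx' : x ∈ d :: L := by
          rcases List.mem_cons.1 hx with r | r
          · exact absurd r hxc
          · exact r
        have hdx : x = d ∨ Sw d x := by
          rcases List.mem_cons.1 hx' with r | r
          · exact Or.inl r
          · exact Or.inr ((List.pairwise_cons.1 hpw.2).1 x r)
        have : x.2 ≤ d.2 := by
          rcases hdx with rfl | r
          · exact le_rfl
          · exact r.2.1
        have e2 : c.2 = d.2 := by omega
        have := (ih h1 hx').2 (by omega) m (by omega) m2
        rw [e2]
        exact List.mem_cons_of_mem _ this

theorem path_conv {L : List (ℕ × ℕ)} {p : List Bool} (h : IsPath L p)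
    {x y z : ℕ × ℕ} (hx : x ∈ L) (hy : y ∈ L) (h1 : x.1 ≤ z.1) (h2 : z.1 ≤ y.1)
    (h3 : x.2 ≤ z.2) (h4 : z.2 ≤ y.2) : z ∈ L := by
  induction L generalizing p with
  | nil => simp at hx
  | cons c L ih =>
    rcases path_comp h hx hy with e | e
    · subst e
      have : z = x := Prod.ext (by omega) (by omega)
      rw [this]; exact hx
    by_cases hxc : x = c
    · subst hxc
      have k := path_conv_head h hy
      have hs : Sw x y := by
        rcases List.mem_cons.1 hy with r | r
        · subst r; unfold Sw at e; omega
        · exact (List.pairwise_cons.1 (path_pairwise h)).1 y r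
      unfold Sw at hs
      have := k.2 (by omega) z.1 h1 h2
      have hz : z = (z.1, x.2) := Prod.ext rfl (by simp; omega)
      rw [hz]; exact this
    by_cases hyc : y = c
    · subst hyc
      have k := path_conv_head h hx
      have hs : Sw y x := by
        rcases List.mem_cons.1 hx with r | r
        · subst r; unfold Sw at e; omega
        · exact (List.pairwise_cons.1 (path_pairwise h)).1 x r
      unfold Sw at hs
      have := k.1 (by omega) z.2 h3 h4
      have hz : z = (y.1, z.2) := Prod.ext (by simp; omega) rfl
      rw [hz]; exact this
    have hx' : x ∈ L := by
      rcases List.mem_cons.1 hx with r | r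
      · exact absurd r hxc
      · exact r
    have hy' : y ∈ L := by
      rcases List.mem_cons.1 hy with r | r
      · exact absurd r hyc
      · exact r
    cases L with
    | nil => simp at hx'
    | cons d L =>
      obtain ⟨b, p', rfl, k1, -⟩ := IsPath_cons h
      exact List.mem_cons_of_mem _ (ih k1 hx' hy')

theorem exists_path (p : List Bool) : ∃ L, IsPath L p := by
  suffices h : ∀ i j, ∃ L, IsPath ((i, j + p.count false) :: L) p by
    obtain ⟨L, hL⟩ := h 0 0
    exact ⟨_, hL⟩
  induction p with
  | nil => intro i j; exact ⟨[], trivial⟩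
  | cons b p ih =>
    intro i j
    cases b with
    | false =>
      obtain ⟨L, hL⟩ := ih i j
      refine ⟨_ :: L, ⟨⟨?_, ?_⟩, hL⟩⟩
      · simp
      · simp; omega
    | true =>
      obtain ⟨L, hL⟩ := ih (i + 1) j
      refine ⟨_ :: L, ⟨⟨?_, ?_⟩, hL⟩⟩ <;> simp

theorem exists_shape {L : List (ℕ × ℕ)} {p : List Bool} (h : IsPath L p) :
    ∃ R : SkewShape, R.cells = L.toFinset := by
  classical
  let O : Finset (ℕ × ℕ) := L.toFinset.biUnion (fun c => Finset.Iic c)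
  have hO : ∀ x, x ∈ O ↔ ∃ c ∈ L, x ≤ c := by intro x; simp [O]
  have hOl : IsLowerSet (O : Set (ℕ × ℕ)) := by
    intro a b hab ha
    simp only [Finset.mem_coe, hO] at *
    obtain ⟨c, hc, hac⟩ := ha
    exact ⟨c, hc, hab.trans hac⟩
  have hIl : IsLowerSet ((O \ L.toFinset : Finset (ℕ × ℕ)) : Set (ℕ × ℕ)) := by
    intro a b hab ha
    simp only [Finset.coe_sdiff, Set.mem_sdiff, Finset.mem_coe, List.mem_toFinset] at *
    refine ⟨hOl hab ha.1, fun hb => ha.2 ?_⟩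
    obtain ⟨c, hc, hac⟩ := (hO a).1 ha.1
    exact path_conv h hb hc hab.1 hac.1 hab.2 hac.2
  refine ⟨⟨⟨O, hOl⟩, ⟨O \ L.toFinset, hIl⟩, ?_⟩, ?_⟩
  · intro x hx
    exact (Finset.mem_sdiff.1 hx).1
  · unfold SkewShape.cells
    simp only
    rw [Finset.sdiff_sdiff_eq_self]
    intro x hx
    exact (hO x).2 ⟨x, List.mem_toFinset.1 hx, le_rfl⟩

theorem path_ribbon {L : List (ℕ × ℕ)} {p : List Bool} (h : IsPath L p) {R : SkewShape}
    (hR : R.cells = L.toFinset) : R.Ribbon := by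
  refine ⟨⟨?_, ?_⟩, ?_⟩
  · obtain ⟨c, L', rfl⟩ := IsPath_ne h
    exact ⟨c, by rw [hR]; simp⟩
  · rintro ⟨B, C, ⟨b, hb⟩, ⟨c, hc⟩, h1, h2, h3⟩
    rw [hR] at h1
    have key : ∀ (L : List (ℕ × ℕ)) (p : List Bool), IsPath L p → (∀ x ∈ L, x ∈ B ∨ x ∈ C) →
        (∀ x ∈ L, x ∈ B) ∨ (∀ x ∈ L, x ∈ C) := by
      intro L
      induction L with
      | nil => intro p _ _; exact Or.inl (by simp)
      | cons c L ih =>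
        intro p hp hx
        cases L with
        | nil =>
          rcases hx c (by simp) with r | r
          · exact Or.inl (by simpa using r)
          · exact Or.inr (by simpa using r)
        | cons d L =>
          obtain ⟨b, p', rfl, k1, k2⟩ := IsPath_cons hp
          rcases ih p' k1 (fun x hx' => hx x (List.mem_cons_of_mem _ hx')) with r | r
          · left
            intro x hx'
            rcases List.mem_cons.1 hx' with rfl | hx'
            · rcases hx x (by simp) with s | s
              · exact s
              · have := h3 d (r d (by simp)) x s
                omega
            · exact r x hx'
          · right
            intro x hx'
            rcases List.mem_cons.1 hx' with rfl | hx'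
            · rcases hx x (by simp) with s | s
              · have := h3 x s d (r d (by simp))
                omega
              · exact s
            · exact r x hx'
    have hbL : b ∈ L := by
      rw [← List.mem_toFinset, ← h1]; exact Finset.mem_union_left _ hb
    have hcL : c ∈ L := by
      rw [← List.mem_toFinset, ← h1]; exact Finset.mem_union_right _ hc
    rcases key L p h (fun x hx => by
      rw [← List.mem_toFinset, ← h1] at hx; exact Finset.mem_union.1 hx) with r | r
    · have : c ∈ B ∩ C := Finset.mem_inter.2 ⟨r c hcL, hc⟩
      rw [h2] at this; simp at this
    · have : b ∈ B ∩ C := Finset.mem_inter.2 ⟨hb, r b hbL⟩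
      rw [h2] at this; simp at this
  · rintro i j ⟨h1, -, -, h4⟩
    rw [hR, List.mem_toFinset] at h1 h4
    rcases path_comp h h1 h4 with e | e | e
    · simp at e
    · unfold Sw at e; simp at e
    · unfold Sw at e; simp at e

theorem ribbon_path {A : SkewShape} (hA : A.Ribbon) : ∃ L p, IsPath L p ∧ A.cells = L.toFinset := by
  classical
  obtain ⟨⟨hne, hconn⟩, h22⟩ := hA
  have conv : ∀ x y z : ℕ × ℕ, x ∈ A.cells → y ∈ A.cells → x ≤ z → z ≤ y → z ∈ A.cells := by
    intro x y z hx hy hxz hzy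
    unfold SkewShape.cells at *
    rw [Finset.mem_sdiff] at *
    exact ⟨A.outer.isLowerSet hzy hy.1, fun hz => hx.2 (A.inner.isLowerSet hxz hz)⟩
  have inc : ∀ x y : ℕ × ℕ, x ∈ A.cells → y ∈ A.cells → ¬ (x.1 < y.1 ∧ x.2 < y.2) := by
    rintro x y hx hy ⟨h1, h2⟩
    refine h22 x.1 x.2 ⟨hx, ?_, ?_, ?_⟩
    all_goals
      apply conv x y _ hx hy
      · constructor <;> simp
      · constructor <;> simp <;> omega
  have succ : ∀ c ∈ A.cells, (∃ d ∈ A.cells, ¬ ReadsBefore d c) →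
      ∃ s ∈ A.cells, (c.1 = s.1 ∧ c.2 = s.2 + 1) ∨ (s.1 = c.1 + 1 ∧ s.2 = c.2) := by
    intro c hc ⟨d, hd, hdc⟩
    by_contra hcon
    push Not at hcon
    apply hconn
    refine ⟨A.cells.filter (fun x => ReadsBefore x c), A.cells.filter (fun x => ¬ ReadsBefore x c),
      ⟨c, ?_⟩, ⟨d, ?_⟩, ?_, ?_, ?_⟩
    · exact Finset.mem_filter.2 ⟨hc, Or.inr ⟨rfl, le_rfl⟩⟩
    · simp [hd, hdc]
    · exact Finset.filter_union_filter_not_eq _ _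
    · ext x; simp only [Finset.mem_inter, Finset.mem_filter, Finset.notMem_empty]; tauto
    · intro b hb e he
      rw [Finset.mem_filter] at hb he
      obtain ⟨hb, hbc⟩ := hb
      obtain ⟨he, hec⟩ := he
      unfold ReadsBefore at hbc hec
      constructor
      · intro heq
        have : (c.1, c.2 - 1) ∈ A.cells := by
          apply conv e c _ he hc
          · constructor <;> simp <;> omega
          · constructor <;> simp
        have := (hcon _ this).1 rfl
        simp at this; omega
      · intro heq
        have i1 := inc b c hb hc
        have i2 := inc c e hc he
        have : (c.1 + 1, c.2) ∈ A.cells := by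
          apply conv c e _ hc he
          · constructor <;> simp
          · constructor <;> simp <;> omega
        exact (hcon _ this).2 rfl rfl
  have main : ∀ n, ∀ c ∈ A.cells, (A.cells.filter (fun d => ReadsBefore c d)).card = n →
      ∃ L p, IsPath (c :: L) p ∧ ∀ d, d ∈ c :: L ↔ d ∈ A.cells ∧ ReadsBefore c d := by
    intro n
    induction n using Nat.strong_induction_on with
    | _ n ih =>
      intro c hc hn
      by_cases hex : ∃ d ∈ A.cells, ¬ ReadsBefore d c
      · obtain ⟨s, hs, hsc⟩ := succ c hc hex
        have hiff : ∀ d ∈ A.cells, ReadsBefore c d ↔ d = c ∨ ReadsBefore s d := by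
          intro d hd
          have i1 := inc d s hd hs
          have i2 := inc c d hc hd
          have e : d = c ↔ d.1 = c.1 ∧ d.2 = c.2 := Prod.ext_iff
          rw [e]
          unfold ReadsBefore
          omega
        have hlt : (A.cells.filter (fun d => ReadsBefore s d)).card < n := by
          rw [← hn]
          apply Finset.card_lt_card
          rw [Finset.ssubset_iff_of_subset]
          · refine ⟨c, ?_, ?_⟩
            · exact Finset.mem_filter.2 ⟨hc, Or.inr ⟨rfl, le_rfl⟩⟩
            · rw [Finset.mem_filter]
              rintro ⟨-, h⟩
              unfold ReadsBefore at h; omega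
          · intro d hd
            rw [Finset.mem_filter] at *
            exact ⟨hd.1, (hiff d hd.1).2 (Or.inr hd.2)⟩
        obtain ⟨L, p, h1, h2⟩ := ih _ hlt s hs rfl
        have hmem : ∀ d, d ∈ c :: s :: L ↔ d ∈ A.cells ∧ ReadsBefore c d := by
          intro d
          rw [List.mem_cons, h2]
          constructor
          · rintro (rfl | ⟨a, b⟩)
            · exact ⟨hc, by simp [ReadsBefore]⟩
            · exact ⟨a, (hiff d a).2 (Or.inr b)⟩
          · rintro ⟨a, b⟩
            rcases (hiff d a).1 b with r | r
            · exact Or.inl r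
            · exact Or.inr ⟨a, r⟩
        rcases hsc with r | r
        · exact ⟨s :: L, false :: p, ⟨r, h1⟩, hmem⟩
        · exact ⟨s :: L, true :: p, ⟨r, h1⟩, hmem⟩
      · push Not at hex
        refine ⟨[], [], trivial, ?_⟩
        intro d
        rw [List.mem_singleton]
        constructor
        · rintro rfl
          exact ⟨hc, by simp [ReadsBefore]⟩
        · rintro ⟨a, b⟩
          have := hex d a
          unfold ReadsBefore at *
          exact Prod.ext (by omega) (by omega)
  obtain ⟨a, ha, hamin⟩ := A.cells.exists_min_image Prod.fst hne
  obtain ⟨c, hc, hcmax⟩ := (A.cells.filter (fun x => x.1 = a.1)).exists_max_image Prod.snd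
    ⟨a, by simp [ha]⟩
  rw [Finset.mem_filter] at hc
  obtain ⟨L, p, h1, h2⟩ := main _ c hc.1 rfl
  refine ⟨c :: L, p, h1, ?_⟩
  ext d
  rw [List.mem_toFinset, h2]
  refine ⟨fun h => ⟨h, ?_⟩, fun h => h.1⟩
  have k1 := hamin d h
  have k2 := hcmax d
  rw [Finset.mem_filter] at k2
  unfold ReadsBefore
  rcases Nat.lt_or_ge c.1 d.1 with r | r
  · exact Or.inl r
  · have e : d.1 = a.1 := by omega
    exact Or.inr ⟨by omega, k2 ⟨h, e⟩⟩

end RibW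

namespace RibW

def rl : List Bool → List ℕ
  | [] => [1]
  | false :: p => ((rl p).headD 0 + 1) :: (rl p).tail
  | true :: p => 1 :: rl p

theorem rl_ne (p : List Bool) : rl p ≠ [] := by
  cases p with
  | nil => simp [rl]
  | cons b p => cases b <;> simp [rl]

theorem rl_pos (p : List Bool) : ∀ a ∈ rl p, 1 ≤ a := by
  induction p with
  | nil => simp [rl]
  | cons b p ih =>
    cases b with
    | false =>
      intro a ha
      rcases List.mem_cons.1 ha with h | h
      · omega
      · exact ih a (List.mem_of_mem_tail h)
    | true =>
      intro a ha
      rcases List.mem_cons.1 ha with h | h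
      · omega
      · exact ih a h

theorem rl_sum (p : List Bool) : (rl p).sum = p.length + 1 := by
  induction p with
  | nil => simp [rl]
  | cons b p ih =>
    obtain ⟨a, l, e⟩ := List.exists_cons_of_ne_nil (rl_ne p)
    rw [e] at ih
    cases b <;> simp [rl, e] at ih ⊢ <;> omega

theorem pp_rl (p : List Bool) : pp (rl p) = true :: p := by
  induction p with
  | nil => simp [rl, pp]
  | cons b p ih =>
    obtain ⟨a, l, e⟩ := List.exists_cons_of_ne_nil (rl_ne p)
    have hp := rl_pos p
    rw [e] at ih hp
    have ha : 1 ≤ a := hp a (by simp)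
    cases b with
    | true => simp [rl, pp, e] at ih ⊢; exact ih
    | false =>
      simp [rl, pp, e] at ih ⊢
      obtain ⟨a, rfl⟩ : ∃ m, a = m + 1 := ⟨a - 1, by omega⟩
      rw [List.replicate_succ, ← ih]; simp

theorem rl_false (n : ℕ) (a : ℕ) (l : List ℕ) (p : List Bool) (h : rl p = a :: l) :
    rl (List.replicate n false ++ p) = (a + n) :: l := by
  induction n with
  | zero => simpa using h
  | succ n ih => simp [List.replicate_succ, rl, ih]; omega

theorem rl_pp (l : List ℕ) (a : ℕ) (hpos : ∀ x ∈ a :: l, 1 ≤ x) : rl (pat (a :: l)) = a :: l := by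
  induction l generalizing a with
  | nil =>
    have := hpos a (by simp)
    simp only [pat, pp, List.tail_cons, List.append_nil]
    have h := rl_false (a - 1) 1 [] [] rfl
    rw [List.append_nil] at h
    rw [h]; congr 1; omega
  | cons b l ih =>
    have := hpos a (by simp)
    have i := ih b (fun x hx => hpos x (List.mem_cons_of_mem _ hx))
    have h2 : pp (b :: l) = true :: pat (b :: l) := by simp [pat, pp]
    have h1 : pat (a :: b :: l) = List.replicate (a - 1) false ++ true :: pat (b :: l) := by
      rw [← h2]; rfl
    rw [h1, rl_false (a - 1) 1 (b :: l)]
    · congr 1; omega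
    · simp [rl, i]

theorem path_rows {L : List (ℕ × ℕ)} {p : List Bool} {c : ℕ × ℕ} (h : IsPath (c :: L) p) :
    (∀ x ∈ c :: L, c.1 ≤ x.1) ∧
    ∀ t, (c :: L).countP (fun x => decide (x.1 = c.1 + t)) = (rl p).getD t 0 := by
  induction L generalizing p c with
  | nil =>
    rw [IsPath_nil] at h
    subst h
    refine ⟨by simp, fun t => ?_⟩
    cases t <;> simp [rl]
  | cons d L ih =>
    obtain ⟨b, p', rfl, h1, h2⟩ := IsPath_cons h
    obtain ⟨i1, i2⟩ := ih h1
    refine ⟨?_, ?_⟩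
    · intro x hx
      rcases List.mem_cons.1 hx with rfl | hx
      · exact le_rfl
      · have := i1 x hx; omega
    · intro t
      rw [List.countP_cons]
      obtain ⟨a, l, e⟩ := List.exists_cons_of_ne_nil (rl_ne p')
      rcases h2 with ⟨rfl, h2, -⟩ | ⟨rfl, h2, -⟩
      · have := i2 t
        rw [h2, this, e]
        cases t <;> simp [rl, e]
      · cases t with
        | zero =>
          have : (d :: L).countP (fun x => decide (x.1 = c.1 + 0)) = 0 := by
            rw [List.countP_eq_zero]
            intro x hx
            have := i1 x hx
            simp; omega
          rw [this]; simp [rl]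
        | succ t =>
          have := i2 t
          rw [h2] at this
          have e3 : c.1 + (t + 1) = c.1 + 1 + t := by omega
          rw [e3, this]
          simp [rl]; omega

theorem card_filter {L : List (ℕ × ℕ)} (hn : L.Nodup) (P : ℕ × ℕ → Prop) [DecidablePred P] :
    (L.toFinset.filter P).card = L.countP (fun x => decide (P x)) := by
  rw [List.countP_eq_length_filter, ← List.toFinset_card_of_nodup (hn.filter _),
    List.toFinset_filter]
  congr 1
  ext; simp

theorem rowEq_iff {L : List (ℕ × ℕ)} {p : List Bool} (h : IsPath L p) {A : SkewShape}
    (hA : A.cells = L.toFinset) : A.RowEquitable ↔ Equi (rl p) := by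
  have hn := path_nodup h
  obtain ⟨c, L, rfl⟩ := IsPath_ne h
  obtain ⟨h1, h2⟩ := path_rows h
  have hr : ∀ t, A.rowLen (c.1 + t) = (rl p).getD t 0 := by
    intro t
    unfold SkewShape.rowLen
    rw [hA, card_filter hn, h2]
  have hs : ∀ i, i ∈ A.rowSet ↔ ∃ t, t < (rl p).length ∧ i = c.1 + t := by
    intro i
    have : i ∈ A.rowSet ↔ c.1 ≤ i ∧ A.rowLen i ≠ 0 := by
      unfold SkewShape.rowSet SkewShape.rowLen
      rw [hA, Finset.mem_image, Finset.card_ne_zero]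
      constructor
      · rintro ⟨x, hx, rfl⟩
        exact ⟨h1 x (List.mem_toFinset.1 hx), x, by simpa using hx⟩
      · rintro ⟨-, x, hx⟩
        rw [Finset.mem_filter] at hx
        exact ⟨x, hx⟩
    rw [this]
    constructor
    · rintro ⟨a, b⟩
      refine ⟨i - c.1, ?_, by omega⟩
      by_contra hcon
      apply b
      have := hr (i - c.1)
      rw [show c.1 + (i - c.1) = i by omega] at this
      rw [this, List.getD_eq_default _ _ (by omega)]
    · rintro ⟨t, ht, rfl⟩
      refine ⟨by omega, ?_⟩
      rw [hr, List.getD_eq_getElem _ _ ht]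
      have := rl_pos p _ (List.getElem_mem ht)
      omega
  constructor
  · intro hE a ha b hb
    obtain ⟨i, hi, rfl⟩ := List.mem_iff_getElem.1 ha
    obtain ⟨j, hj, rfl⟩ := List.mem_iff_getElem.1 hb
    have := hE _ ((hs _).2 ⟨i, hi, rfl⟩) _ ((hs _).2 ⟨j, hj, rfl⟩)
    rw [hr, hr, List.getD_eq_getElem _ _ hi, List.getD_eq_getElem _ _ hj] at this
    exact this
  · intro hE i hi j hj
    obtain ⟨t, ht, rfl⟩ := (hs _).1 hi
    obtain ⟨u, hu, rfl⟩ := (hs _).1 hj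
    rw [hr, hr, List.getD_eq_getElem _ _ ht, List.getD_eq_getElem _ _ hu]
    exact hE _ (List.getElem_mem ht) _ (List.getElem_mem hu)

theorem size_eq {L : List (ℕ × ℕ)} {p : List Bool} (h : IsPath L p) {A : SkewShape}
    (hA : A.cells = L.toFinset) : A.size = p.length + 1 := by
  unfold SkewShape.size
  rw [hA, List.toFinset_card_of_nodup (path_nodup h), path_length h]

theorem des_iff {L : List (ℕ × ℕ)} {p : List Bool} (h : IsPath L p) (T : ℕ × ℕ → ℕ)
    (hT : ∀ c ∈ L, 1 ≤ T c) :
    ((∀ x ∈ L, ∀ y ∈ L, x.1 = y.1 → x.2 ≤ y.2 → T x ≤ T y) ∧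
     (∀ x ∈ L, ∀ y ∈ L, x.2 = y.2 → x.1 < y.1 → T x < T y)) ↔
    des (L.map (fun c => T c - 1)) = p := by
  induction L generalizing p with
  | nil => cases p <;> simp [IsPath] at h
  | cons c L ih =>
    cases L with
    | nil =>
      rw [IsPath_nil] at h; subst h
      simp [des]
    | cons d L =>
      have hpw := path_pairwise h
      obtain ⟨b, p', rfl, h1, h2⟩ := IsPath_cons h
      have i := ih h1 (fun x hx => hT x (List.mem_cons_of_mem _ hx))
      have tc := hT c (by simp)
      have td := hT d (by simp)
      rw [List.map_cons, List.map_cons, des, List.cons.injEq, ← List.map_cons (f := fun c => T c - 1), ← i]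
      rw [List.pairwise_cons] at hpw
      have hd : ∀ x ∈ d :: L, x = d ∨ Sw d x := by
        intro x hx
        rcases List.mem_cons.1 hx with r | r
        · exact Or.inl r
        · exact Or.inr ((List.pairwise_cons.1 hpw.2).1 x r)
      constructor
      · rintro ⟨a1, a2⟩
        refine ⟨?_, fun x hx y hy => a1 x (List.mem_cons_of_mem _ hx) y (List.mem_cons_of_mem _ hy),
          fun x hx y hy => a2 x (List.mem_cons_of_mem _ hx) y (List.mem_cons_of_mem _ hy)⟩
        rcases h2 with ⟨rfl, e1, e2⟩ | ⟨rfl, e1, e2⟩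
        · have := a1 d (by simp) c (by simp) e1.symm (by omega)
          simp; omega
        · have := a2 c (by simp) d (by simp) e2.symm (by omega)
          simp; omega
      · rintro ⟨a0, a1, a2⟩
        constructor
        · intro x hx y hy e1 e2
          rcases List.mem_cons.1 hx with rx | rx <;> rcases List.mem_cons.1 hy with ry | ry
          · rw [rx, ry]
          · subst rx
            have := hpw.1 y ry
            unfold Sw at this; omega
          · subst ry
            have hdx : d.1 ≤ x.1 ∧ x.2 ≤ d.2 := by
              rcases hd x rx with rfl | r
              · exact ⟨le_rfl, le_rfl⟩
              · exact ⟨r.1, r.2.1⟩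
            rcases h2 with ⟨rfl, e3, e4⟩ | ⟨rfl, e3, e4⟩
            · have := a1 x rx d (by simp) (by omega) hdx.2
              simp at a0; omega
            · omega
          · exact a1 x rx y ry e1 e2
        · intro x hx y hy e1 e2
          rcases List.mem_cons.1 hx with rx | rx <;> rcases List.mem_cons.1 hy with ry | ry
          · subst rx; subst ry; omega
          · subst rx
            rcases h2 with ⟨rfl, e3, e4⟩ | ⟨rfl, e3, e4⟩
            · rcases hd y ry with rfl | r
              · omega
              · unfold Sw at r; omega
            · have hlt : T x < T d := by simp at a0; omega
              rcases hd y ry with rfl | r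
              · exact hlt
              · unfold Sw at r
                have := a2 d (by simp) y ry (by omega) (by omega)
                omega
          · subst ry
            have := hpw.1 x rx
            unfold Sw at this; omega
          · exact a2 x rx y ry e1 e2

theorem Lat_iff (w : List ℕ) : Lat w ↔ ∀ u v, w = u ++ v → Par (fn Z u) := by
  constructor
  · rintro h u v rfl
    exact Par_fn Par_Z ((Lat_append u v).1 h).1
  · intro h
    induction w using List.reverseRecOn with
    | nil => trivial
    | append_singleton v e ih =>
      rw [Lat_snoc]
      refine ⟨ih (fun a b hab => h a (b ++ [e]) (by rw [hab, List.append_assoc])), ?_⟩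
      have := h (v ++ [e]) [] (by simp)
      rw [fn_snoc] at this
      intro j hj
      have := this j
      subst hj
      simp only [ad, if_true] at this
      rw [if_neg (by omega)] at this
      omega

theorem card_count {M : List (ℕ × ℕ)} (hn : M.Nodup) (T : ℕ × ℕ → ℕ) (hT : ∀ c ∈ M, 1 ≤ T c)
    (k : ℕ) : (M.toFinset.filter (fun c => T c = k + 1)).card
      = (M.map (fun c => T c - 1)).count k := by
  rw [card_filter hn, List.count, List.countP_map]
  apply List.countP_congr
  intro x hx
  have := hT x hx
  simp; omega

theorem pre_mem {L1 L2 : List (ℕ × ℕ)} {d : ℕ × ℕ} {p : List Bool} (h : IsPath (L1 ++ d :: L2) p)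
    (c : ℕ × ℕ) : (c ∈ L1 ++ d :: L2 ∧ ReadsBefore c d) ↔ c ∈ L1 ++ [d] := by
  have hp := path_pairwise h
  rw [List.pairwise_append, List.pairwise_cons] at hp
  obtain ⟨-, ⟨h2, -⟩, h3⟩ := hp
  simp only [List.mem_append, List.mem_cons, List.not_mem_nil, or_false]
  constructor
  · rintro ⟨h4 | h4 | h4, h5⟩
    · exact Or.inl h4
    · exact Or.inr h4
    · have := h2 c h4
      unfold Sw at this; unfold ReadsBefore at h5; omega
  · rintro (h4 | rfl)
    · refine ⟨Or.inl h4, ?_⟩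
      have := h3 c h4 d (by simp)
      unfold Sw at this; unfold ReadsBefore; omega
    · exact ⟨by simp, Or.inr ⟨rfl, le_rfl⟩⟩

theorem pre_card {L1 L2 : List (ℕ × ℕ)} {d : ℕ × ℕ} {p : List Bool} (h : IsPath (L1 ++ d :: L2) p)
    (T : ℕ × ℕ → ℕ) (hT : ∀ c ∈ L1 ++ d :: L2, 1 ≤ T c) (k : ℕ) :
    ((L1 ++ d :: L2).toFinset.filter (fun c => T c = k + 1 ∧ ReadsBefore c d)).card
      = fn Z ((L1 ++ [d]).map (fun c => T c - 1)) k := by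
  have hn : (L1 ++ [d]).Nodup := by
    have hs : List.Sublist (L1 ++ [d]) (L1 ++ d :: L2) := by simp
    exact List.Pairwise.sublist hs (path_nodup h)
  rw [fn_count, ← card_count hn T]
  · simp only [Z, Nat.zero_add]
    congr 1
    ext c
    rw [Finset.mem_filter, Finset.mem_filter, List.mem_toFinset, List.mem_toFinset, ← pre_mem h c]
    tauto
  · intro c hc
    exact hT c ((pre_mem h c).2 hc).1

theorem lr_iff {L : List (ℕ × ℕ)} {p : List Bool} (h : IsPath L p) {A : SkewShape}
    (hA : A.cells = L.toFinset) (T : ℕ × ℕ → ℕ) (hT : ∀ c ∈ L, 1 ≤ T c) :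
    A.IsLR T ↔ Lat (L.map (fun c => T c - 1)) ∧ des (L.map (fun c => T c - 1)) = p := by
  unfold SkewShape.IsLR
  rw [and_comm]
  apply and_congr
  · rw [Lat_iff, hA]
    constructor
    · intro hl u v e
      obtain ⟨L1, L2, rfl, rfl, rfl⟩ := List.map_eq_append_iff.1 e
      rcases List.eq_nil_or_concat L1 with rfl | ⟨L3, d, rfl⟩
      · exact Par_Z
      · simp only [List.concat_eq_append, List.append_assoc, List.singleton_append] at *
        intro k
        have := hl d (by simp) k
        rw [pre_card (L1 := L3) (L2 := L2) h T hT, pre_card (L1 := L3) (L2 := L2) h T hT] at this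
        exact this
    · intro hl d hd k
      obtain ⟨L1, L2, rfl⟩ := List.append_of_mem (List.mem_toFinset.1 hd)
      rw [pre_card h T hT, pre_card h T hT]
      exact hl ((L1 ++ [d]).map (fun c => T c - 1)) (L2.map (fun c => T c - 1)) (by simp) k
  · rw [← des_iff h T hT]
    unfold SkewShape.IsSsyt
    rw [hA]
    constructor
    · rintro ⟨-, h1, h2⟩
      constructor
      · rintro ⟨x1, x2⟩ hx ⟨y1, y2⟩ hy e1 e2
        simp only at e1 e2
        subst e1
        exact h1 _ _ _ (List.mem_toFinset.2 hx) (List.mem_toFinset.2 hy) e2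
      · rintro ⟨x1, x2⟩ hx ⟨y1, y2⟩ hy e1 e2
        simp only at e1 e2
        subst e1
        exact h2 _ _ _ (List.mem_toFinset.2 hx) (List.mem_toFinset.2 hy) e2
    · rintro ⟨h1, h2⟩
      refine ⟨fun c hc => hT c (List.mem_toFinset.1 hc), ?_, ?_⟩
      · intro i j j' hx hy e
        exact h1 _ (List.mem_toFinset.1 hx) _ (List.mem_toFinset.1 hy) rfl e
      · intro i j j' hx hy e
        exact h2 _ (List.mem_toFinset.1 hx) _ (List.mem_toFinset.1 hy) rfl e

theorem content_eq {L : List (ℕ × ℕ)} {p : List Bool} (h : IsPath L p) {A : SkewShape}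
    (hA : A.cells = L.toFinset) (T : ℕ × ℕ → ℕ) (hT : ∀ c ∈ L, 1 ≤ T c) (k : ℕ) :
    A.content T (k + 1) = fn Z (L.map (fun c => T c - 1)) k := by
  unfold SkewShape.content
  rw [hA, card_count (path_nodup h) T hT, fn_count]
  simp [Z]

theorem exists_fill {L : List (ℕ × ℕ)} (hn : L.Nodup) (w : List ℕ) (hw : w.length = L.length) :
    ∃ T : ℕ × ℕ → ℕ, (∀ c ∈ L, 1 ≤ T c) ∧ (∀ c, c ∉ L → T c = 0) ∧
      L.map (fun c => T c - 1) = w := by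
  induction L generalizing w with
  | nil => exact ⟨fun _ => 0, by simp, by simp, by simpa [eq_comm] using hw⟩
  | cons c L ih =>
    cases w with
    | nil => simp at hw
    | cons a w =>
      rw [List.nodup_cons] at hn
      obtain ⟨T, h1, h2, h3⟩ := ih hn.2 w (by simpa using hw)
      refine ⟨fun x => if x = c then a + 1 else T x, ?_, ?_, ?_⟩
      · intro x hx
        simp only
        split_ifs with hxc
        · omega
        · rcases List.mem_cons.1 hx with r | r
          · exact absurd r hxc
          · exact h1 x r
      · intro x hx
        rw [List.mem_cons, not_or] at hx
        simp only
        rw [if_neg hx.1]; exact h2 x hx.2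
      · rw [List.map_cons]
        congr 1
        · simp
        · rw [← h3]
          apply List.map_congr_left
          intro x hx
          have hxc : x ≠ c := by
            rintro rfl
            exact hn.1 hx
          simp [hxc]

def WS (p : List Bool) (f : ℕ → ℕ) : Set (List ℕ) :=
  {w | w ≠ [] ∧ Lat w ∧ des w = p ∧ fn Z w = f}

theorem WS_finite (p : List Bool) (f : ℕ → ℕ) : (WS p f).Finite := by
  by_cases h : ∃ w, w ∈ WS p f
  · obtain ⟨w, hw⟩ := h
    apply (w.permutations.toFinset.finite_toSet).subset
    intro v hv
    simp only [Finset.mem_coe, List.mem_toFinset, List.mem_permutations]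
    rw [List.perm_iff_count]
    intro k
    have h1 := congrFun hv.2.2.2 k
    have h2 := congrFun hw.2.2.2 k
    rw [fn_count] at h1 h2
    omega
  · push Not at h
    have : WS p f = ∅ := Set.eq_empty_of_forall_notMem h
    rw [this]; exact Set.finite_empty

theorem lr_pos {L : List (ℕ × ℕ)} {A : SkewShape} (hA : A.cells = L.toFinset) {T : ℕ × ℕ → ℕ}
    (hT : A.IsLR T) : ∀ c ∈ L, 1 ≤ T c := by
  intro c hc
  exact hT.1.1 c (by rw [hA]; exact List.mem_toFinset.2 hc)

theorem fill_mem {L : List (ℕ × ℕ)} {p : List Bool} (h : IsPath L p) {A : SkewShape}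
    (hA : A.cells = L.toFinset) {T : ℕ × ℕ → ℕ} {lam : Multiset ℕ} (hT : A.IsLR T)
    (hc : ∀ i : ℕ, A.content T (i + 1) = part lam i) :
    L.map (fun c => T c - 1) ∈ WS p (part lam) := by
  have hp := lr_pos hA hT
  have h2 := (lr_iff h hA T hp).1 hT
  refine ⟨?_, h2.1, h2.2, ?_⟩
  · obtain ⟨c, L', rfl⟩ := IsPath_ne h
    simp
  · funext k
    rw [← content_eq h hA T hp, hc]

theorem word_fill {L : List (ℕ × ℕ)} {p : List Bool} (h : IsPath L p) {A : SkewShape}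
    (hA : A.cells = L.toFinset) {w : List ℕ} {lam : Multiset ℕ} (hw : w ∈ WS p (part lam)) :
    ∃ T ∈ A.LRset lam, L.map (fun c => T c - 1) = w := by
  obtain ⟨h1, h2, h3, h4⟩ := hw
  have hl : w.length = L.length := by
    have := des_length w
    have := List.length_pos_iff.2 h1
    rw [path_length h, ← h3]; omega
  obtain ⟨T, t1, t2, t3⟩ := exists_fill (path_nodup h) w hl
  refine ⟨T, ⟨?_, ?_, ?_⟩, t3⟩
  · rw [lr_iff h hA T t1, t3]; exact ⟨h2, h3⟩
  · intro c hc
    apply t2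
    rwa [hA, List.mem_toFinset] at hc
  · intro i
    rw [content_eq h hA T t1, t3, h4]

theorem image_eq {L : List (ℕ × ℕ)} {p : List Bool} (h : IsPath L p) {A : SkewShape}
    (hA : A.cells = L.toFinset) (lam : Multiset ℕ) :
    (A.LRset lam).ncard = (WS p (part lam)).ncard := by
  have : (fun T : ℕ × ℕ → ℕ => L.map (fun c => T c - 1)) '' (A.LRset lam) = WS p (part lam) := by
    ext w
    constructor
    · rintro ⟨T, ⟨h1, -, h3⟩, rfl⟩
      exact fill_mem h hA h1 h3
    · intro hw
      exact word_fill h hA hw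
  rw [← this, Set.InjOn.ncard_image]
  intro T hT U hU e
  funext c
  by_cases hc : c ∈ L
  · have := (List.map_inj_left.1 e) c hc
    have h1 := lr_pos hA hT.1 c hc
    have h2 := lr_pos hA hU.1 c hc
    omega
  · rw [hT.2.1 c (by rw [hA]; simpa using hc), hU.2.1 c (by rw [hA]; simpa using hc)]

theorem part_exists {f : ℕ → ℕ} (hf : Par f) {n : ℕ} (hn : f n = 0) :
    ∃ lam : Multiset ℕ, 0 ∉ lam ∧ part lam = f := by
  classical
  have hex : ∃ n, f n = 0 := ⟨n, hn⟩
  let m := Nat.find hex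
  refine ⟨(((List.range m).map f : List ℕ) : Multiset ℕ), ?_, ?_⟩
  · intro h0
    rw [Multiset.mem_coe, List.mem_map] at h0
    obtain ⟨a, ha, h⟩ := h0
    exact Nat.find_min hex (List.mem_range.1 ha) h
  · have hs : ((List.range m).map f).Pairwise (· ≥ ·) := by
      rw [List.pairwise_map]
      exact List.pairwise_lt_range.imp (fun h => Par_le hf (le_of_lt h))
    funext i
    unfold part
    rw [Multiset.coe_sort, List.mergeSort_eq_self]
    · by_cases hi : i < m
      · rw [List.getD_eq_getElem _ _ (by simpa using hi)]; simp
      · rw [List.getD_eq_default _ _ (by simpa using hi)]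
        have h1 := Par_le hf (show m ≤ i by omega)
        have h2 : f m = 0 := Nat.find_spec hex
        omega
    · exact hs.imp (by intro a b h; simpa using h)

theorem final (A : SkewShape) (hA : A.Ribbon) (h : ¬ A.RowEquitable) :
    ∃ R : SkewShape, R.Ribbon ∧ R.RowEquitable ∧ R.size = A.size ∧
      R.SchurPosDiff A ∧ A.supp ⊂ R.supp := by
  obtain ⟨L, p, hL, hAL⟩ := ribbon_path hA
  rw [rowEq_iff hL hAL] at h
  obtain ⟨l', l1, l2, l3, l4, hLe⟩ := reach (rl p) (rl_pos p)
  have hne : l' ≠ [] := by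
    intro e
    rw [e] at l2
    exact rl_ne p (List.length_eq_zero_iff.1 l2.symm)
  have hp : pat (rl p) = p := by rw [pat, pp_rl]; rfl
  rw [hp] at hLe
  obtain ⟨L', hL'⟩ := exists_path (pat l')
  obtain ⟨R, hR⟩ := exists_shape hL'
  have hrl : rl (pat l') = l' := by
    obtain ⟨a, l, rfl⟩ := List.exists_cons_of_ne_nil hne
    exact rl_pp l a l1
  obtain ⟨Ψ, P1, P2⟩ := hLe
  have hmap : ∀ f, ∀ w ∈ WS p f, Ψ w ∈ WS (pat l') f := by
    rintro f w ⟨w1, w2, w3, w4⟩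
    obtain ⟨a, b, c, d⟩ := P1 w w1 w2 w3
    exact ⟨a, b, c, d.trans w4⟩
  refine ⟨R, path_ribbon hL' hR, ?_, ?_, ?_, ?_⟩
  · rw [rowEq_iff hL' hR, hrl]; exact l4
  · rw [size_eq hL' hR, size_eq hL hAL, ← rl_sum, ← rl_sum, hrl, l3]
  · intro lam
    rw [image_eq hL hAL, image_eq hL' hR]
    apply Set.ncard_le_ncard_of_injOn Ψ (hmap _) _ (WS_finite _ _)
    rintro w ⟨w1, w2, w3, -⟩ v ⟨v1, v2, v3, -⟩ e
    exact P2 w v w1 w2 w3 v1 v2 v3 e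
  · rw [Set.ssubset_iff_of_subset]
    · obtain ⟨w, w1, w2, w3, w4⟩ := equi_word hne l1 l4
      obtain ⟨lam, hl0, hlam⟩ : ∃ lam : Multiset ℕ, 0 ∉ lam ∧ part lam = fn Z w := by
        apply part_exists (Par_fn Par_Z w2) (n := w.sum + 1)
        rw [fn_count]
        simp only [Z, Nat.zero_add]
        apply List.count_eq_zero_of_not_mem
        intro hm
        have := List.le_sum_of_mem hm
        omega
      refine ⟨lam, ?_, ?_⟩
      · have : w ∈ WS (pat l') (part lam) := ⟨w1, w2, (pat_iff hne _).2 w3, hlam.symm⟩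
        obtain ⟨T, hT, -⟩ := word_fill hL' hR this
        exact ⟨hl0, T, hT.1, hT.2.2⟩
      · rintro ⟨-, T, hT, hc⟩
        obtain ⟨v1, v2, v3, v4⟩ := fill_mem hL hAL hT hc
        have := not_equi (rl_pos p) h v1 v2 (by rw [v3, pp_rl])
        rw [v4, hlam, ← l2] at this
        omega
    · rintro lam ⟨h0, T, hT, hc⟩
      obtain ⟨U, hU, -⟩ := word_fill hL' hR (hmap _ _ (fill_mem hL hAL hT hc))
      exact ⟨h0, U, hU.1, hU.2.2⟩

end RibW

/-- If `A` is a ribbon that is not row equitable, then there exists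
a row equitable ribbon `R` of the same size such that `s_R − s_A` is
Schur-positive and `supp A` is strictly contained in `supp R`. -/
theorem exists_rowEquitable_ribbon_above (A : SkewShape)
    (hA : A.Ribbon) (h : ¬ A.RowEquitable) :
    ∃ R : SkewShape, R.Ribbon ∧ R.RowEquitable ∧ R.size = A.size ∧
      R.SchurPosDiff A ∧ A.supp ⊂ R.supp := by
  exact RibW.final A hA h
end
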